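/- (Potential energy decay along a sequence of times) Let λ = 1, a > -1/4, 0 < b < 1, and let u be a smooth Schwartz solution of (INLS) with sup_{t∈ℝ} ‖u(t)‖_{H¹(ℝ³)} ≤ E for some E > 0. Then there exist a sequence of times t_n → ∞ and a sequence of radii R_n → ∞ such that lim_{n→∞} ∫_{|x| ≤ R_n} |u(t_n,x)|⁴/|x|^b dx = 0. -/

import Mathlib

open MeasureTheory Real Filter
open scoped BigOperators Topology

noncomputable section

/-- Three-dimensional Euclidean space. -/
abbrev E3 : Type := EuclideanSpace ℝ (Fin 3)

/-- The `j`-th standard basis vector of `E3`. -/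
def e3 (j : Fin 3) : E3 := EuclideanSpace.single j 1

/-- The `j`-th spatial partial derivative of a complex-valued function. -/
def pd (j : Fin 3) (f : E3 → ℂ) (x : E3) : ℂ := fderiv ℝ f x (e3 j)

/-- The `j`-th spatial partial derivative of a real-valued function. -/
def pdR (j : Fin 3) (w : E3 → ℝ) (x : E3) : ℝ := fderiv ℝ w x (e3 j)

/-- The Laplacian of a complex-valued function on `E3`. -/
def lap (f : E3 → ℂ) (x : E3) : ℂ := ∑ j : Fin 3, pd j (fun y => pd j f y) x

/-- The Laplacian of a real-valued function on `E3`. -/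
def lapR (w : E3 → ℝ) (x : E3) : ℝ := ∑ j : Fin 3, pdR j (fun y => pdR j w y) x

/-- Second partial derivatives `∂_j ∂_k w` of a real-valued function on `E3`. -/
def pdR2 (j k : Fin 3) (w : E3 → ℝ) (x : E3) : ℝ := pdR j (fun y => pdR k w y) x

/-- A smooth Schwartz solution of the inhomogeneous cubic NLS with inverse-square
potential: `i ∂ₜ u + Δu − (a/|x|²) u = λ |x|^{−b} |u|² u` on `ℝ × (ℝ³ \ {0})`,
with `u(t,·)` Schwartz for each time, and Schwartz seminorms of `u(t,·)`
and `∂ₜ u(t,·)` locally uniformly bounded in `t`. -/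
structure IsSchwartzSolution (a b lam : ℝ) (u : ℝ → E3 → ℂ) : Prop where
  smooth : ContDiff ℝ (⊤ : ℕ∞) (Function.uncurry u)
  schwartz : ∀ t : ℝ, ∃ f : SchwartzMap E3 ℂ, ∀ x : E3, f x = u t x
  schwartz_dt : ∀ t : ℝ, ∃ f : SchwartzMap E3 ℂ, ∀ x : E3,
      f x = deriv (fun s => u s x) t
  unif_bound : ∀ (k n : ℕ) (T : ℝ), 0 < T → ∃ C : ℝ, ∀ t ∈ Set.Icc (-T) T, ∀ x : E3,
      ‖x‖ ^ k * ‖iteratedFDeriv ℝ n (u t) x‖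
        + ‖x‖ ^ k * ‖iteratedFDeriv ℝ n (fun y => deriv (fun s => u s y) t) x‖ ≤ C
  eqn : ∀ (t : ℝ) (x : E3), x ≠ 0 →
      Complex.I * deriv (fun s => u s x) t + lap (u t) x
          - ((a / ‖x‖ ^ 2 : ℝ) : ℂ) * u t x
        = (lam : ℂ) * ((‖x‖ ^ (-b) : ℝ) : ℂ) * ((‖u t x‖ ^ 2 : ℝ) : ℂ) * u t x

/-! Test the equation against the momentum along the truncated virial field `X = ρ x`, where
`ρ = (1 + s²|x|²)^(-1/2)` and `s = 1/R`. The inverse-square potential forces `u(t, 0) = 0`, since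
`i ∂ₜu + Δu` is continuous there, so the singular currents that occur, although not smooth at the
origin, have divergence of mean zero. What remains of the time derivative of the momentum is a
kinetic term at least `2 ρ³|∇u|²`, enough to absorb the charge `a ≥ -1/4` by a pointwise form of
Hardy's inequality, an error `O(1/R)` controlled by the energy norm, and a nonlinear term that
dominates half the potential energy in the ball of radius `R`. The momentum itself is `O(R)`
uniformly in time, so at arbitrarily late times its derivative is at most `1/R`, and there the
potential energy in the ball is `O(1/R)`. -/

open scoped InnerProductSpace

section Schwartz

variable {V F G H : Type*} [NormedAddCommGroup V] [NormedSpace ℝ V]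
  [NormedAddCommGroup F] [NormedSpace ℝ F] [NormedAddCommGroup G] [NormedSpace ℝ G]
  [NormedAddCommGroup H] [NormedSpace ℝ H]

/-- The bare function `f` is a Schwartz function: the unbundled form of `SchwartzMap`, so that
functions given by formulas need not be repackaged. -/
def IsSchwartz (f : V → F) : Prop := ∃ φ : SchwartzMap V F, ∀ x, φ x = f x

namespace IsSchwartz

variable {f g : V → F}

theorem coe (φ : SchwartzMap V F) : IsSchwartz φ := ⟨φ, fun _ => rfl⟩

theorem exists_coe_eq (hf : IsSchwartz f) : ∃ φ : SchwartzMap V F, φ = f :=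
  hf.imp fun _ => funext

theorem contDiff (hf : IsSchwartz f) : ContDiff ℝ (⊤ : ℕ∞) f := by
  obtain ⟨φ, rfl⟩ := hf.exists_coe_eq
  exact φ.smooth ⊤

theorem differentiable (hf : IsSchwartz f) : Differentiable ℝ f :=
  hf.contDiff.differentiable (by simp)

theorem continuous (hf : IsSchwartz f) : Continuous f := hf.contDiff.continuous

theorem hasTemperateGrowth (hf : IsSchwartz f) : f.HasTemperateGrowth := by
  obtain ⟨φ, rfl⟩ := hf.exists_coe_eq
  exact φ.hasTemperateGrowth

theorem exists_norm_le (hf : IsSchwartz f) : ∃ C, ∀ x, ‖f x‖ ≤ C := by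
  obtain ⟨φ, rfl⟩ := hf.exists_coe_eq
  exact ⟨_, φ.norm_le_seminorm ℝ⟩

theorem fderiv (hf : IsSchwartz f) : IsSchwartz (fderiv ℝ f) := by
  obtain ⟨φ, rfl⟩ := hf.exists_coe_eq
  exact ⟨SchwartzMap.fderivCLM ℝ V F φ, SchwartzMap.fderivCLM_apply ℝ φ⟩

theorem exists_norm_le_mul_norm (hf : IsSchwartz f) (hf0 : f 0 = 0) :
    ∃ L, ∀ x, ‖f x‖ ≤ L * ‖x‖ := by
  obtain ⟨L, hL⟩ := hf.fderiv.exists_norm_le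
  refine ⟨L, fun x => ?_⟩
  simpa [hf0] using convex_univ.norm_image_sub_le_of_norm_fderiv_le (𝕜 := ℝ)
    (fun y _ => hf.differentiable y) (fun y _ => hL y) (Set.mem_univ 0) (Set.mem_univ x)

theorem add (hf : IsSchwartz f) (hg : IsSchwartz g) : IsSchwartz fun x => f x + g x := by
  obtain ⟨φ, rfl⟩ := hf.exists_coe_eq
  obtain ⟨γ, rfl⟩ := hg.exists_coe_eq
  exact coe (φ + γ)

theorem sub (hf : IsSchwartz f) (hg : IsSchwartz g) : IsSchwartz fun x => f x - g x := by
  obtain ⟨φ, rfl⟩ := hf.exists_coe_eq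
  obtain ⟨γ, rfl⟩ := hg.exists_coe_eq
  exact coe (φ - γ)

theorem sum {ι : Type*} {s : Finset ι} {f : ι → V → F} (hf : ∀ i ∈ s, IsSchwartz (f i)) :
    IsSchwartz fun x => ∑ i ∈ s, f i x := by
  classical
  induction s using Finset.induction_on with
  | empty => exact coe (0 : SchwartzMap V F)
  | insert i s hi ih =>
    simp only [Finset.sum_insert hi]
    exact (hf i (Finset.mem_insert_self i s)).add
      (ih fun j hj => hf j (Finset.mem_insert_of_mem hj))

theorem bilin (B : F →L[ℝ] G →L[ℝ] H) {g : V → G} (hf : IsSchwartz f)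
    (hg : g.HasTemperateGrowth) : IsSchwartz fun x => B (f x) (g x) := by
  obtain ⟨φ, rfl⟩ := hf.exists_coe_eq
  exact coe (SchwartzMap.bilinLeftCLM B hg φ)

theorem clm_comp (L : F →L[ℝ] G) (hf : IsSchwartz f) : IsSchwartz fun x => L (f x) := by
  obtain ⟨φ, rfl⟩ := hf.exists_coe_eq
  exact coe (SchwartzMap.postcompCLM L φ)

theorem smul_left {c : V → ℝ} (hc : c.HasTemperateGrowth) (hf : IsSchwartz f) :
    IsSchwartz fun x => c x • f x :=
  hf.bilin (ContinuousLinearMap.lsmul ℝ ℝ).flip hc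

theorem clm_apply {A : V → G →L[ℝ] H} {v : V → G} (hA : IsSchwartz A)
    (hv : v.HasTemperateGrowth) : IsSchwartz fun x => A x (v x) :=
  hA.bilin (ContinuousLinearMap.id ℝ (G →L[ℝ] H)) hv

theorem inner {K : Type*} [NormedAddCommGroup K] [InnerProductSpace ℝ K] {f g : V → K}
    (hf : IsSchwartz f) (hg : IsSchwartz g) : IsSchwartz fun x => inner ℝ (f x) (g x) :=
  hf.bilin (innerSL ℝ) hg.hasTemperateGrowth

variable [MeasurableSpace V] [BorelSpace V] [SecondCountableTopology V]
  {μ : Measure V} [μ.HasTemperateGrowth]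

theorem integrable (hf : IsSchwartz f) : Integrable f μ := by
  obtain ⟨φ, rfl⟩ := hf.exists_coe_eq
  exact φ.integrable

theorem integrable_norm_mul_norm (hf : IsSchwartz f) : Integrable (fun x => ‖x‖ * ‖f x‖) μ := by
  obtain ⟨φ, rfl⟩ := hf.exists_coe_eq
  simpa only [pow_one] using φ.integrable_pow_mul μ 1

end IsSchwartz

end Schwartz

section Divergence

theorem sum_smul_e3 (v : E3) : ∑ j, v j • e3 j = v := by
  ext k
  simp [e3, Pi.single_apply]

theorem norm_sq_eq_sum_sq (v : E3) : ‖v‖ ^ 2 = ∑ j, v j ^ 2 := by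
  simp only [EuclideanSpace.norm_sq_eq, Real.norm_eq_abs, sq_abs]

theorem map_eq_sum_smul_e3 {F : Type*} [NormedAddCommGroup F] [NormedSpace ℝ F] (A : E3 →L[ℝ] F)
    (v : E3) : A v = ∑ j, v j • A (e3 j) := by
  conv_lhs => rw [← sum_smul_e3 v]
  simp only [map_sum, map_smul]

theorem differentiable_coord (j : Fin 3) : Differentiable ℝ fun y : E3 => y j :=
  (EuclideanSpace.proj j : E3 →L[ℝ] ℝ).differentiable

theorem fderiv_coord (X : E3 → E3) {x : E3} (hX : DifferentiableAt ℝ X x) (j : Fin 3) (v : E3) :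
    fderiv ℝ (fun y => X y j) x v = (fderiv ℝ X x v) j :=
  congrArg (· v) ((EuclideanSpace.proj j : E3 →L[ℝ] ℝ).hasFDerivAt.comp x hX.hasFDerivAt).fderiv

/-- The divergence of a vector field on `E3`. -/
def divergence (X : E3 → E3) (x : E3) : ℝ := ∑ j, pdR j (fun y => X y j) x

variable {X Y : E3 → E3} {c : E3 → ℝ} {x : E3}

theorem divergence_eq_sum_fderiv (hX : DifferentiableAt ℝ X x) :
    divergence X x = ∑ j, (fderiv ℝ X x (e3 j)) j :=
  Finset.sum_congr rfl fun j _ => fderiv_coord X hX j (e3 j)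

theorem divergence_add (hX : DifferentiableAt ℝ X x) (hY : DifferentiableAt ℝ Y x) :
    divergence (fun y => X y + Y y) x = divergence X x + divergence Y x := by
  rw [divergence_eq_sum_fderiv (hX.fun_add hY), divergence_eq_sum_fderiv hX,
    divergence_eq_sum_fderiv hY, fderiv_fun_add hX hY, ← Finset.sum_add_distrib]
  rfl

theorem divergence_sub (hX : DifferentiableAt ℝ X x) (hY : DifferentiableAt ℝ Y x) :
    divergence (fun y => X y - Y y) x = divergence X x - divergence Y x := by
  rw [divergence_eq_sum_fderiv (hX.fun_sub hY), divergence_eq_sum_fderiv hX,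
    divergence_eq_sum_fderiv hY, fderiv_fun_sub hX hY, ← Finset.sum_sub_distrib]
  rfl

theorem divergence_smul (hc : DifferentiableAt ℝ c x) (hX : DifferentiableAt ℝ X x) :
    divergence (fun y => c y • X y) x = c x * divergence X x + fderiv ℝ c x (X x) := by
  rw [divergence_eq_sum_fderiv (hc.fun_smul hX), divergence_eq_sum_fderiv hX, fderiv_fun_smul hc hX,
    map_eq_sum_smul_e3 (fderiv ℝ c x) (X x), Finset.mul_sum, ← Finset.sum_add_distrib]
  simp [mul_comm]

theorem divergence_id : divergence (fun y => y) x = 3 := by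
  rw [divergence_eq_sum_fderiv differentiableAt_fun_id]
  simp [e3]

theorem divergence_smul_self (hc : DifferentiableAt ℝ c x) :
    divergence (fun y => c y • y) x = 3 * c x + fderiv ℝ c x x := by
  rw [divergence_smul hc differentiableAt_fun_id, divergence_id, mul_comm]

theorem integral_pdR_eq_zero {w : E3 → ℝ} (j : Fin 3) (hw : Differentiable ℝ w)
    (hwi : Integrable w) (hdw : Integrable (pdR j w)) : ∫ x, pdR j w x = 0 := by
  have h := integral_mul_fderiv_eq_neg_fderiv_mul_of_integrable (μ := (volume : Measure E3))
    (f := fun _ => (1 : ℝ)) (g := w) (v := e3 j)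
    (by simp) (by simp only [one_mul]; exact hdw) (by simpa using hwi) (by fun_prop)
    fun x _ => hw x
  simpa [pdR] using h

theorem integrable_pdR_coord (hX : Differentiable ℝ X) (hdX : Integrable (fderiv ℝ X))
    (j : Fin 3) : Integrable (pdR j fun y => X y j) := by
  have hcoord : pdR j (fun y => X y j) = fun x => EuclideanSpace.proj j (fderiv ℝ X x (e3 j)) :=
    funext fun x => fderiv_coord X (hX x) j (e3 j)
  rw [hcoord]
  exact (EuclideanSpace.proj j : E3 →L[ℝ] ℝ).integrable_comp
    (hdX.apply_continuousLinearMap (e3 j))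

theorem integrable_divergence (hX : Differentiable ℝ X) (hdX : Integrable (fderiv ℝ X)) :
    Integrable (divergence X) :=
  integrable_finsetSum _ fun j _ => integrable_pdR_coord hX hdX j

theorem integral_divergence_eq_zero (hX : Differentiable ℝ X) (hXi : Integrable X)
    (hdX : Integrable (fderiv ℝ X)) : ∫ x, divergence X x = 0 := by
  have hcoord : ∀ j, Differentiable ℝ fun y => X y j := fun j => (differentiable_coord j).comp hX
  have hcoord_int : ∀ j, Integrable fun y => X y j := fun j =>
    (EuclideanSpace.proj j : E3 →L[ℝ] ℝ).integrable_comp hXi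
  simp only [divergence]
  rw [integral_finsetSum _ fun j _ => integrable_pdR_coord hX hdX j]
  exact Finset.sum_eq_zero fun j _ =>
    integral_pdR_eq_zero j (hcoord j) (hcoord_int j) (integrable_pdR_coord hX hdX j)

end Divergence

section Gradient

variable {f g : E3 → ℂ} {x : E3}

/-- The squared length `|∇f|²` of the gradient. -/
def gradSq (f : E3 → ℂ) (x : E3) : ℝ := ∑ j, ‖pd j f x‖ ^ 2

theorem gradSq_nonneg (f : E3 → ℂ) (x : E3) : 0 ≤ gradSq f x :=
  Finset.sum_nonneg fun _ _ => sq_nonneg _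

theorem fderiv_eq_sum_pd (f : E3 → ℂ) (x v : E3) : fderiv ℝ f x v = ∑ j, v j • pd j f x :=
  map_eq_sum_smul_e3 _ v

theorem norm_fderiv_apply_sq_le (f : E3 → ℂ) (x v : E3) :
    ‖fderiv ℝ f x v‖ ^ 2 ≤ ‖v‖ ^ 2 * gradSq f x := by
  calc ‖fderiv ℝ f x v‖ ^ 2 ≤ (∑ j, |v j| * ‖pd j f x‖) ^ 2 := by
        rw [fderiv_eq_sum_pd]
        gcongr
        exact (norm_sum_le _ _).trans_eq (by simp only [norm_smul, Real.norm_eq_abs])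
    _ ≤ (∑ j, |v j| ^ 2) * ∑ j, ‖pd j f x‖ ^ 2 := Finset.sum_mul_sq_le_sq_mul_sq _ _ _
    _ = ‖v‖ ^ 2 * gradSq f x := by simp only [sq_abs, norm_sq_eq_sum_sq, gradSq]

theorem contDiff_pd {n : WithTop ℕ∞} (hf : ContDiff ℝ (n + 1) f) (j : Fin 3) :
    ContDiff ℝ n (pd j f) :=
  (hf.fderiv_right le_rfl).clm_apply contDiff_const

theorem fderiv_pd (hf : ContDiff ℝ 2 f) (j : Fin 3) (x v : E3) :
    fderiv ℝ (pd j f) x v = fderiv ℝ (fderiv ℝ f) x v (e3 j) := by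
  have hd : DifferentiableAt ℝ (fderiv ℝ f) x :=
    (hf.fderiv_right (m := 1) le_rfl).differentiable one_ne_zero x
  have h := hd.hasFDerivAt.clm_apply (hasFDerivAt_const (e3 j) x)
  rw [ContinuousLinearMap.comp_zero, zero_add] at h
  exact DFunLike.congr_fun h.fderiv v

theorem pdR_inner (hf : DifferentiableAt ℝ f x) (hg : DifferentiableAt ℝ g x) (j : Fin 3) :
    pdR j (fun y => ⟪f y, g y⟫_ℝ) x = ⟪f x, pd j g x⟫_ℝ + ⟪pd j f x, g x⟫_ℝ :=
  fderiv_inner_apply ℝ hf hg (e3 j)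

theorem hasFDerivAt_gradSq (hf : ContDiff ℝ 2 f) (x : E3) :
    HasFDerivAt (gradSq f) (∑ j, 2 • (innerSL ℝ (pd j f x)).comp (fderiv ℝ (pd j f) x)) x :=
  HasFDerivAt.fun_sum fun j _ =>
    ((contDiff_pd hf j).differentiable one_ne_zero x).hasFDerivAt.norm_sq

theorem fderiv_gradSq (hf : ContDiff ℝ 2 f) (x v : E3) :
    fderiv ℝ (gradSq f) x v = 2 * ∑ j, ⟪pd j f x, fderiv ℝ (pd j f) x v⟫_ℝ := by
  rw [(hasFDerivAt_gradSq hf x).fderiv, Finset.mul_sum]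
  simp only [sum_apply, smul_apply, nsmul_eq_mul, Nat.cast_ofNat, ContinuousLinearMap.comp_apply,
    innerSL_apply_apply]

/-- The vector field with components `⟪∂ⱼ f, w⟫`. -/
def flux (f w : E3 → ℂ) (x : E3) : E3 := ∑ j, ⟪pd j f x, w x⟫_ℝ • e3 j

theorem flux_coord (f w : E3 → ℂ) (x : E3) (k : Fin 3) : flux f w x k = ⟪pd k f x, w x⟫_ℝ := by
  simp [flux, e3, Pi.single_apply]

theorem differentiableAt_flux (hf : ContDiff ℝ 2 f) {w : E3 → ℂ} (hw : DifferentiableAt ℝ w x) :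
    DifferentiableAt ℝ (flux f w) x :=
  DifferentiableAt.fun_sum fun j _ =>
    (((contDiff_pd hf j).differentiable one_ne_zero x).inner ℝ hw).smul_const (e3 j)

theorem divergence_flux (hf : ContDiff ℝ 2 f) {w : E3 → ℂ} (hw : DifferentiableAt ℝ w x) :
    divergence (flux f w) x = ⟪lap f x, w x⟫_ℝ + ∑ j, ⟪pd j f x, pd j w x⟫_ℝ := by
  have hd : ∀ j, DifferentiableAt ℝ (pd j f) x := fun j =>
    (contDiff_pd hf j).differentiable one_ne_zero x
  simp only [divergence, flux_coord, pdR_inner (hd _) hw, Finset.sum_add_distrib, lap, sum_inner]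
  rw [add_comm]

end Gradient

section Morawetz

variable {X : E3 → E3} {f g : E3 → ℂ} {x : E3}

/-- The multiplier `2 X·∇f + (div X) f` of the Morawetz identity for the vector field `X`. -/
def multiplier (X : E3 → E3) (f : E3 → ℂ) (x : E3) : ℂ :=
  (2 : ℝ) • fderiv ℝ f x (X x) + divergence X x • f x

/-- The density `Im (f̄ X·∇g)` of the polarized momentum along `X`, written as a real inner
product. -/
def momentumDensity (X : E3 → E3) (f g : E3 → ℂ) (x : E3) : ℝ :=
  ⟪Complex.I * f x, fderiv ℝ g x (X x)⟫_ℝ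

/-- The quadratic form `Re ∂ⱼXₖ ∂ⱼf̄ ∂ₖf` of the Morawetz identity. -/
def gradForm (X : E3 → E3) (f : E3 → ℂ) (x : E3) : ℝ :=
  ∑ j, ⟪pd j f x, fderiv ℝ f x (fderiv ℝ X x (e3 j))⟫_ℝ

/-- The smooth current whose divergence appears in the Morawetz identity. -/
def morawetzCurrent (X : E3 → E3) (f g : E3 → ℂ) (x : E3) : E3 :=
  ⟪Complex.I * f x, g x⟫_ℝ • X x + gradSq f x • X x - flux f (multiplier X f) x

theorem inner_I_mul_left (z w : ℂ) : ⟪Complex.I * z, w⟫_ℝ = -⟪z, Complex.I * w⟫_ℝ := by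
  simp only [Complex.inner, map_mul, Complex.conj_I, Complex.mul_re, Complex.mul_im, Complex.neg_re,
    Complex.neg_im, Complex.I_re, Complex.I_im]
  ring

theorem contDiff_divergence (hX : ContDiff ℝ 2 X) : ContDiff ℝ 1 (divergence X) := by
  have hcoord : ∀ j, ContDiff ℝ 2 fun y => X y j := fun j =>
    (EuclideanSpace.proj j : E3 →L[ℝ] ℝ).contDiff.comp hX
  exact ContDiff.sum fun j _ => ((hcoord j).fderiv_right (m := 1) le_rfl).clm_apply contDiff_const

theorem hasFDerivAt_multiplier (hX : ContDiff ℝ 2 X) (hf : ContDiff ℝ 2 f) (x : E3) :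
    HasFDerivAt (multiplier X f)
      ((2 : ℝ) • ((fderiv ℝ f x).comp (fderiv ℝ X x) + (fderiv ℝ (fderiv ℝ f) x).flip (X x)) +
        (divergence X x • fderiv ℝ f x + (fderiv ℝ (divergence X) x).smulRight (f x))) x := by
  have hdf : HasFDerivAt (fderiv ℝ f) (fderiv ℝ (fderiv ℝ f) x) x :=
    ((hf.fderiv_right (m := 1) le_rfl).differentiable one_ne_zero x).hasFDerivAt
  have hdX : HasFDerivAt X (fderiv ℝ X x) x := (hX.differentiable two_ne_zero x).hasFDerivAt
  have hdiv : HasFDerivAt (divergence X) (fderiv ℝ (divergence X) x) x :=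
    ((contDiff_divergence hX).differentiable one_ne_zero x).hasFDerivAt
  exact ((hdf.clm_apply hdX).const_smul (2 : ℝ)).add
    (hdiv.smul (hf.differentiable two_ne_zero x).hasFDerivAt)

theorem pd_multiplier (hX : ContDiff ℝ 2 X) (hf : ContDiff ℝ 2 f) (j : Fin 3) (x : E3) :
    pd j (multiplier X f) x =
      (2 : ℝ) • (fderiv ℝ f x (fderiv ℝ X x (e3 j)) + fderiv ℝ (pd j f) x (X x)) +
        (divergence X x • pd j f x + pdR j (divergence X) x • f x) := by
  have hsymm : IsSymmSndFDerivAt ℝ f x := hf.contDiffAt.isSymmSndFDerivAt (by simp)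
  rw [pd, (hasFDerivAt_multiplier hX hf x).fderiv, fderiv_pd hf, hsymm.eq]
  rfl

theorem divergence_flux_multiplier (hX : ContDiff ℝ 2 X) (hf : ContDiff ℝ 2 f) (x : E3) :
    divergence (flux f (multiplier X f)) x =
      ⟪lap f x, multiplier X f x⟫_ℝ + 2 * gradForm X f x +
        divergence (fun y => gradSq f y • X y) x +
        ∑ j, pdR j (divergence X) x * ⟪pd j f x, f x⟫_ℝ := by
  rw [divergence_flux hf (hasFDerivAt_multiplier hX hf x).differentiableAt,
    divergence_smul (hasFDerivAt_gradSq hf x).differentiableAt (hX.differentiable two_ne_zero x),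
    fderiv_gradSq hf, gradSq, gradForm]
  simp only [pd_multiplier hX hf, inner_add_right, real_inner_smul_right, mul_add,
    Finset.sum_add_distrib, Finset.mul_sum, Finset.sum_mul, real_inner_self_eq_norm_sq]
  simp only [mul_comm]
  ring

theorem divergence_inner_smul (hX : DifferentiableAt ℝ X x) (hf : DifferentiableAt ℝ f x)
    (hg : DifferentiableAt ℝ g x) :
    divergence (fun y => ⟪Complex.I * f y, g y⟫_ℝ • X y) x =
      momentumDensity X g f x + momentumDensity X f g x
        - ⟪multiplier X f x, Complex.I * g x⟫_ℝ := by
  have hIf : HasFDerivAt (fun y => Complex.I * f y) (Complex.I • fderiv ℝ f x) x :=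
    hf.hasFDerivAt.const_mul Complex.I
  rw [divergence_smul (hIf.differentiableAt.inner ℝ hg) hX,
    fderiv_inner_apply ℝ hIf.differentiableAt hg, hIf.fderiv]
  have hswap : momentumDensity X g f x = ⟪fderiv ℝ f x (X x), Complex.I * g x⟫_ℝ :=
    real_inner_comm _ _
  rw [hswap]
  simp only [momentumDensity, multiplier, inner_add_left, real_inner_smul_left, smul_apply,
    smul_eq_mul, inner_I_mul_left]
  ring

theorem momentumDensity_add_swap (hX : ContDiff ℝ 2 X) (hf : ContDiff ℝ 2 f)
    (hg : DifferentiableAt ℝ g x) {W : ℝ} (heq : Complex.I * g x + lap f x = W • f x) :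
    momentumDensity X g f x + momentumDensity X f g x =
      divergence (morawetzCurrent X f g) x + 2 * gradForm X f x
        + ∑ j, pdR j (divergence X) x * ⟪pd j f x, f x⟫_ℝ
        + W * ⟪multiplier X f x, f x⟫_ℝ := by
  have hXd := hX.differentiable two_ne_zero x
  have hfd := hf.differentiable two_ne_zero x
  have hflux : DifferentiableAt ℝ (flux f (multiplier X f)) x :=
    differentiableAt_flux hf (hasFDerivAt_multiplier hX hf x).differentiableAt
  have hequation : ⟪multiplier X f x, Complex.I * g x⟫_ℝ =
      W * ⟪multiplier X f x, f x⟫_ℝ - ⟪lap f x, multiplier X f x⟫_ℝ := by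
    rw [eq_sub_of_add_eq heq, inner_sub_right, real_inner_smul_right, real_inner_comm (lap f x)]
  have hcharge := divergence_inner_smul hXd hfd hg
  have hstress := divergence_flux_multiplier hX hf x
  have hIfg : DifferentiableAt ℝ (fun y => ⟪Complex.I * f y, g y⟫_ℝ) x :=
    (hfd.const_mul Complex.I).inner ℝ hg
  have hgrad := (hasFDerivAt_gradSq hf x).differentiableAt
  have hsplit : divergence (morawetzCurrent X f g) x =
      divergence (fun y => ⟪Complex.I * f y, g y⟫_ℝ • X y) x +
        divergence (fun y => gradSq f y • X y) x - divergence (flux f (multiplier X f)) x := by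
    rw [← divergence_add (hIfg.fun_smul hXd) (hgrad.fun_smul hXd),
      ← divergence_sub ((hIfg.fun_smul hXd).fun_add (hgrad.fun_smul hXd)) hflux]
    rfl
  linarith

theorem hasTemperateGrowth_fderiv {V F : Type*} [NormedAddCommGroup V] [NormedSpace ℝ V]
    [NormedAddCommGroup F] [NormedSpace ℝ F] {c : V → F} (hc : c.HasTemperateGrowth) :
    (fderiv ℝ c).HasTemperateGrowth := by
  refine ⟨hc.1.fderiv_right (m := (⊤ : ℕ∞)) le_rfl, fun n => ?_⟩
  simpa only [norm_iteratedFDeriv_fderiv] using hc.2 (n + 1)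

theorem hasTemperateGrowth_divergence (hX : X.HasTemperateGrowth) :
    (divergence X).HasTemperateGrowth := by
  have hdX : ∀ j, (fun y => fderiv ℝ X y (e3 j)).HasTemperateGrowth := fun j =>
    (ContinuousLinearMap.apply ℝ E3 (e3 j)).hasTemperateGrowth.comp (hasTemperateGrowth_fderiv hX)
  have hdiv : divergence X = fun y => ∑ j, (fderiv ℝ X y (e3 j)) j :=
    funext fun y => divergence_eq_sum_fderiv (hX.1.differentiable (by simp) y)
  rw [hdiv]
  exact .sum fun j _ => (EuclideanSpace.proj j : E3 →L[ℝ] ℝ).hasTemperateGrowth.comp (hdX j)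

theorem IsSchwartz.pd (hf : IsSchwartz f) (j : Fin 3) : IsSchwartz (pd j f) :=
  hf.fderiv.clm_apply (.const (e3 j))

theorem IsSchwartz.gradSq (hf : IsSchwartz f) : IsSchwartz (gradSq f) := by
  simpa only [real_inner_self_eq_norm_sq] using!
    IsSchwartz.sum fun j (_ : j ∈ Finset.univ) => (hf.pd j).inner (hf.pd j)

theorem IsSchwartz.flux (hf : IsSchwartz f) {w : E3 → ℂ} (hw : IsSchwartz w) :
    IsSchwartz (flux f w) :=
  IsSchwartz.sum fun j _ =>
    ((hf.pd j).inner hw).clm_comp (ContinuousLinearMap.toSpanSingleton ℝ (e3 j))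

theorem IsSchwartz.multiplier (hf : IsSchwartz f) (hX : X.HasTemperateGrowth) :
    IsSchwartz (multiplier X f) :=
  ((hf.fderiv.clm_apply hX).smul_left (.const 2)).add
    (hf.smul_left (hasTemperateGrowth_divergence hX))

theorem IsSchwartz.momentumDensity (hf : IsSchwartz f) (hg : IsSchwartz g)
    (hX : X.HasTemperateGrowth) : IsSchwartz (momentumDensity X f g) :=
  (hf.clm_comp (ContinuousLinearMap.mul ℝ ℂ Complex.I)).inner (hg.fderiv.clm_apply hX)

theorem IsSchwartz.morawetzCurrent (hf : IsSchwartz f) (hg : IsSchwartz g)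
    (hX : X.HasTemperateGrowth) : IsSchwartz (morawetzCurrent X f g) := by
  have smul_X : ∀ {c : E3 → ℝ}, IsSchwartz c → IsSchwartz fun y => c y • X y := fun hc =>
    hc.bilin (ContinuousLinearMap.lsmul ℝ ℝ) hX
  exact ((smul_X ((hf.clm_comp (ContinuousLinearMap.mul ℝ ℂ Complex.I)).inner hg)).add
    (smul_X hf.gradSq)).sub (hf.flux (hf.multiplier hX))

end Morawetz

section InvBracket

variable {V : Type*} [NormedAddCommGroup V]

/-- The inverse Japanese bracket `⟨s x⟩⁻¹ = (1 + s²|x|²)^(-1/2)`. -/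
def invBracket (s : ℝ) (x : V) : ℝ := (1 + s ^ 2 * ‖x‖ ^ 2) ^ (-(1 / 2) : ℝ)

variable (s : ℝ) (x : V)

theorem invBracket_pos : 0 < invBracket s x := by
  unfold invBracket; positivity

theorem invBracket_pow (n : ℕ) :
    invBracket s x ^ n = (1 + s ^ 2 * ‖x‖ ^ 2) ^ (-(n / 2) : ℝ) := by
  rw [invBracket, ← rpow_natCast, ← rpow_mul (by positivity)]
  ring_nf

theorem invBracket_sq_mul : invBracket s x ^ 2 * (1 + s ^ 2 * ‖x‖ ^ 2) = 1 := by
  rw [invBracket_pow, Nat.cast_ofNat, div_self two_ne_zero, rpow_neg_one]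
  exact inv_mul_cancel₀ (by positivity)

theorem invBracket_le_one : invBracket s x ≤ 1 :=
  rpow_le_one_of_one_le_of_nonpos (le_add_of_nonneg_right (by positivity)) (by norm_num)

theorem abs_mul_norm_mul_invBracket_le_one : |s| * (‖x‖ * invBracket s x) ≤ 1 := by
  have h := invBracket_sq_mul s x
  refine (sq_le_one_iff₀ (by have := invBracket_pos s x; positivity)).1 ?_
  rw [mul_pow, mul_pow, sq_abs]
  nlinarith [sq_nonneg (invBracket s x)]

variable [InnerProductSpace ℝ V]

theorem hasFDerivAt_invBracket :
    HasFDerivAt (invBracket s) ((-(s ^ 2 * invBracket s x ^ 3)) • innerSL ℝ x) x := by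
  have hbase : HasFDerivAt (fun y : V => 1 + s ^ 2 * ‖y‖ ^ 2) (s ^ 2 • 2 • innerSL ℝ x) x :=
    ((hasStrictFDerivAt_norm_sq x).hasFDerivAt.const_mul (s ^ 2)).const_add 1
  have h : HasFDerivAt (invBracket s) _ x :=
    hbase.rpow_const (p := -(1 / 2)) (Or.inl (by positivity))
  convert h using 1
  rw [invBracket_pow]
  ext v
  norm_num
  ring

theorem fderiv_invBracket (v : V) :
    fderiv ℝ (invBracket s) x v = -(s ^ 2 * invBracket s x ^ 3) * ⟪x, v⟫_ℝ := by
  rw [(hasFDerivAt_invBracket s x).fderiv]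
  rfl

theorem hasTemperateGrowth_invBracket : (invBracket s : V → ℝ).HasTemperateGrowth := by
  have hcomp : (invBracket s : V → ℝ) =
      (fun y : V => (1 + ‖y‖ ^ 2) ^ (-(1 / 2) : ℝ)) ∘ (s • ContinuousLinearMap.id ℝ V) := by
    ext y
    simp [invBracket, norm_smul, mul_pow]
  rw [hcomp]
  exact (Function.hasTemperateGrowth_one_add_norm_sq_rpow V _).comp
    (s • ContinuousLinearMap.id ℝ V).hasTemperateGrowth

end InvBracket

section VirialField

variable (s : ℝ) (x : E3)

/-- The radial field `x / ⟨s x⟩`, a truncation of the virial field `x` at radius `1 / s`. -/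
def virialField (s : ℝ) (x : E3) : E3 := invBracket s x • x

theorem hasTemperateGrowth_virialField : (virialField s).HasTemperateGrowth :=
  (hasTemperateGrowth_invBracket s).smul .id'

theorem contDiff_virialField {n : ℕ} : ContDiff ℝ n (virialField s) :=
  (hasTemperateGrowth_virialField s).1.of_le (by exact_mod_cast le_top)

theorem fderiv_virialField (v : E3) :
    fderiv ℝ (virialField s) x v =
      invBracket s x • v + (-(s ^ 2 * invBracket s x ^ 3) * ⟪x, v⟫_ℝ) • x := by
  have h : HasFDerivAt (virialField s) _ x :=
    (hasFDerivAt_invBracket s x).smul (hasFDerivAt_id x)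
  rw [h.fderiv]
  rfl

theorem divergence_virialField :
    divergence (virialField s) x = 2 * invBracket s x + invBracket s x ^ 3 := by
  have h := invBracket_sq_mul s x
  rw [show virialField s = fun y => invBracket s y • y from rfl,
    divergence_smul_self (hasFDerivAt_invBracket s x).differentiableAt, fderiv_invBracket,
    real_inner_self_eq_norm_sq]
  linear_combination -invBracket s x * h

theorem inner_e3 (j : Fin 3) : ⟪x, e3 j⟫_ℝ = x j := by
  simp [e3, EuclideanSpace.inner_single_right]

theorem pdR_divergence_virialField (j : Fin 3) :
    pdR j (divergence (virialField s)) x =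
      -(s ^ 2 * (2 * invBracket s x ^ 3 + 3 * invBracket s x ^ 5)) * x j := by
  have hρ := hasFDerivAt_invBracket s x
  have h : HasFDerivAt (fun y => 2 * invBracket s y + invBracket s y ^ 3) _ x :=
    (hρ.const_mul 2).add (hρ.pow 3)
  rw [funext (divergence_virialField s), pdR, h.fderiv]
  simp [inner_e3]
  ring

variable (f : E3 → ℂ)

theorem sum_pdR_divergence_virialField :
    ∑ j, pdR j (divergence (virialField s)) x * ⟪pd j f x, f x⟫_ℝ =
      -(s ^ 2 * (2 * invBracket s x ^ 3 + 3 * invBracket s x ^ 5)) *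
        ⟪f x, fderiv ℝ f x x⟫_ℝ := by
  rw [real_inner_comm, fderiv_eq_sum_pd, sum_inner, Finset.mul_sum]
  simp only [pdR_divergence_virialField, real_inner_smul_left, mul_assoc]

theorem gradForm_virialField :
    gradForm (virialField s) f x =
      invBracket s x * gradSq f x - s ^ 2 * invBracket s x ^ 3 * ‖fderiv ℝ f x x‖ ^ 2 := by
  have hradial : ∑ j, ⟪x, e3 j⟫_ℝ * ⟪pd j f x, fderiv ℝ f x x⟫_ℝ = ‖fderiv ℝ f x x‖ ^ 2 := by
    rw [← real_inner_self_eq_norm_sq]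
    nth_rw 2 [fderiv_eq_sum_pd]
    simp only [sum_inner, real_inner_smul_left, inner_e3]
  have hgrad : ∑ j, ⟪pd j f x, fderiv ℝ f x (e3 j)⟫_ℝ = gradSq f x :=
    Finset.sum_congr rfl fun j _ => real_inner_self_eq_norm_sq _
  simp only [gradForm, fderiv_virialField, map_add, map_smul, inner_add_right,
    real_inner_smul_right, Finset.sum_add_distrib, mul_assoc, ← Finset.mul_sum, hradial, hgrad]
  ring

theorem inner_multiplier_virialField :
    ⟪multiplier (virialField s) f x, f x⟫_ℝ =
      2 * invBracket s x * ⟪f x, fderiv ℝ f x x⟫_ℝ +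
        (2 * invBracket s x + invBracket s x ^ 3) * ‖f x‖ ^ 2 := by
  rw [multiplier, divergence_virialField, virialField, map_smul, inner_add_left,
    real_inner_smul_left, real_inner_smul_left, real_inner_smul_left, real_inner_self_eq_norm_sq,
    real_inner_comm]
  ring

end VirialField

section NormRpow

variable {V : Type*} [NormedAddCommGroup V] {x : V}

theorem norm_rpow_sub_two_mul_norm_sq (hx : x ≠ 0) (r : ℝ) :
    ‖x‖ ^ (r - 2) * ‖x‖ ^ 2 = ‖x‖ ^ r := by
  rw [← rpow_add_natCast (norm_ne_zero_iff.2 hx), Nat.cast_ofNat, sub_add_cancel]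

theorem hasFDerivAt_norm_rpow_of_ne_zero [InnerProductSpace ℝ V] (hx : x ≠ 0) (r : ℝ) :
    HasFDerivAt (fun y => ‖y‖ ^ r) ((r * ‖x‖ ^ (r - 2)) • innerSL ℝ x) x := by
  have hsq : ∀ p : ℝ, (fun y : V => ‖y‖ ^ p) = fun y => (‖y‖ ^ 2) ^ (p / 2) := fun p => by
    ext y
    rw [← rpow_natCast_mul (norm_nonneg y)]
    ring_nf
  have h : HasFDerivAt (fun y => ‖y‖ ^ r) _ x := hsq r ▸
    (hasStrictFDerivAt_norm_sq x).hasFDerivAt.rpow_const (p := r / 2) (Or.inl (by positivity))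
  refine h.congr_fderiv ?_
  rw [congrFun (hsq (r - 2)) x, sub_div, div_self two_ne_zero]
  ext v
  simp only [smul_apply, smul_eq_mul, nsmul_eq_mul, Nat.cast_ofNat]
  ring

end NormRpow

section Singular

theorem hasFDerivAt_smul_self_zero {V : Type*} [NormedAddCommGroup V] [NormedSpace ℝ V]
    {h : V → ℝ} (hh : Tendsto h (𝓝[≠] 0) (𝓝 0)) :
    HasFDerivAt (fun x => h x • x) (0 : V →L[ℝ] V) 0 := by
  rw [hasFDerivAt_iff_isLittleO_nhds_zero]
  have hsmall : (fun x : V => h x • x) =o[𝓝[≠] 0] fun x => x := by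
    simpa using (Asymptotics.isLittleO_one_iff ℝ).2 hh |>.smul_isBigO
      (Asymptotics.isBigO_refl (fun x : V => x) _)
  have hpure : (fun x : V => h x • x) =o[pure 0] fun x => x :=
    Asymptotics.isLittleO_pure.2 (smul_zero _)
  have hnhds : (fun x : V => h x • x) =o[𝓝 0] fun x => x := by
    rw [← nhdsNE_sup_pure (0 : V)]
    exact hsmall.sup hpure
  simpa using hnhds

variable {f : E3 → ℂ} {h : E3 → ℝ}

/-- `h` is singular at most at the origin, with `|h| ≲ |f|` and `|x||∇h| ≲ |f| + |x||∇f|` off the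
origin. If `f` is a Schwartz function vanishing at the origin, the radial field `h x` then has an
integrable divergence of mean zero. -/
structure IsControlledBy (h : E3 → ℝ) (f : E3 → ℂ) : Prop where
  differentiableAt : ∀ x ≠ 0, DifferentiableAt ℝ h x
  abs_le : ∃ K, ∀ x ≠ 0, |h x| ≤ K * ‖f x‖
  norm_fderiv_le : ∃ K, ∀ x ≠ 0,
    ‖x‖ * ‖fderiv ℝ h x‖ ≤ K * (‖f x‖ + ‖x‖ * ‖fderiv ℝ f x‖)

namespace IsControlledBy

theorem tendsto_zero (hh : IsControlledBy h f) (hf : IsSchwartz f) (hf0 : f 0 = 0) :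
    Tendsto h (𝓝[≠] 0) (𝓝 0) := by
  obtain ⟨K, hK⟩ := hh.abs_le
  have hlim : Tendsto (fun x => K * ‖f x‖) (𝓝[≠] 0) (𝓝 0) := by
    have hcont : Continuous fun x => K * ‖f x‖ := continuous_const.mul hf.continuous.norm
    simpa [hf0] using hcont.continuousWithinAt (s := {0}ᶜ) (x := 0) |>.tendsto
  exact squeeze_zero_norm' (eventually_mem_nhdsWithin.mono hK) hlim

variable (hh : IsControlledBy h f) (hf : IsSchwartz f)
include hh hf

theorem integrable_fderiv_smul_self : Integrable (fderiv ℝ fun x => h x • x) := by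
  obtain ⟨K, hK⟩ := hh.abs_le
  obtain ⟨K', hK'⟩ := hh.norm_fderiv_le
  have hdom : Integrable fun x => K * ‖f x‖ + K' * (‖f x‖ + ‖x‖ * ‖fderiv ℝ f x‖) :=
    (hf.integrable.norm.const_mul K).add
      ((hf.integrable.norm.add hf.fderiv.integrable_norm_mul_norm).const_mul K')
  refine hdom.mono' (measurable_fderiv ℝ _).aestronglyMeasurable ?_
  filter_upwards [compl_mem_ae_iff.2 (measure_singleton (0 : E3))] with x hx
  have hd := hh.differentiableAt x hx
  have hderiv : fderiv ℝ (fun x => h x • x) x =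
      h x • ContinuousLinearMap.id ℝ E3 + (fderiv ℝ h x).smulRight x :=
    (hd.hasFDerivAt.smul (hasFDerivAt_id x)).fderiv
  calc ‖fderiv ℝ (fun x => h x • x) x‖
      ≤ ‖h x • ContinuousLinearMap.id ℝ E3‖ + ‖(fderiv ℝ h x).smulRight x‖ :=
        hderiv ▸ norm_add_le _ _
    _ = |h x| + ‖x‖ * ‖fderiv ℝ h x‖ := by
        rw [norm_smul, ContinuousLinearMap.norm_id, mul_one, Real.norm_eq_abs,
          ContinuousLinearMap.norm_smulRight_apply, mul_comm ‖x‖]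
    _ ≤ _ := add_le_add (hK x hx) (hK' x hx)

variable (hf0 : f 0 = 0)
include hf0

theorem differentiable_smul_self : Differentiable ℝ fun x => h x • x := by
  intro x
  rcases eq_or_ne x 0 with rfl | hx
  · exact (hasFDerivAt_smul_self_zero (hh.tendsto_zero hf hf0)).differentiableAt
  · exact (hh.differentiableAt x hx).fun_smul differentiableAt_fun_id

theorem integrable_smul_self : Integrable fun x => h x • x := by
  obtain ⟨K, hK⟩ := hh.abs_le
  refine (hf.integrable_norm_mul_norm.const_mul K).mono'
    (hh.differentiable_smul_self hf hf0).continuous.aestronglyMeasurable (ae_of_all _ fun x => ?_)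
  rcases eq_or_ne x 0 with rfl | hx
  · simp
  · calc ‖h x • x‖ = ‖x‖ * |h x| := by rw [norm_smul, mul_comm, Real.norm_eq_abs]
      _ ≤ ‖x‖ * (K * ‖f x‖) := by gcongr; exact hK x hx
      _ = K * (‖x‖ * ‖f x‖) := by ring

theorem integrable_divergence_smul_self : Integrable (divergence fun x => h x • x) :=
  integrable_divergence (hh.differentiable_smul_self hf hf0) (hh.integrable_fderiv_smul_self hf)

theorem integral_divergence_smul_self : ∫ x, divergence (fun x => h x • x) x = 0 :=
  integral_divergence_eq_zero (hh.differentiable_smul_self hf hf0)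
    (hh.integrable_smul_self hf hf0) (hh.integrable_fderiv_smul_self hf)

end IsControlledBy

theorem IsControlledBy.mul {m : E3 → ℝ} (hh : IsControlledBy h f)
    (hm : ∀ x ≠ 0, DifferentiableAt ℝ m x) (hm_le : ∃ C, ∀ x, |m x| ≤ C)
    (hm' : ∃ C, ∀ x, ‖x‖ * ‖fderiv ℝ m x‖ ≤ C) : IsControlledBy (fun x => m x * h x) f := by
  obtain ⟨C, hC⟩ := hm_le
  obtain ⟨C', hC'⟩ := hm'
  obtain ⟨K, hK⟩ := hh.abs_le
  obtain ⟨K', hK'⟩ := hh.norm_fderiv_le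
  have hC0 : 0 ≤ C := (abs_nonneg _).trans (hC 0)
  refine ⟨fun x hx => (hm x hx).mul (hh.differentiableAt x hx), ⟨C * K, fun x hx => ?_⟩,
    ⟨C * K' + C' * |K|, fun x hx => ?_⟩⟩
  · calc |m x * h x| = |m x| * |h x| := abs_mul _ _
      _ ≤ C * (K * ‖f x‖) := mul_le_mul (hC x) (hK x hx) (abs_nonneg _) hC0
      _ = C * K * ‖f x‖ := by ring
  · set N := ‖f x‖ + ‖x‖ * ‖fderiv ℝ f x‖
    have hKN : |h x| ≤ |K| * N := (hK x hx).trans (by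
      gcongr
      · exact le_abs_self K
      · exact le_add_of_nonneg_right (by positivity))
    calc ‖x‖ * ‖fderiv ℝ (fun x => m x * h x) x‖
        ≤ ‖x‖ * (|m x| * ‖fderiv ℝ h x‖ + |h x| * ‖fderiv ℝ m x‖) := by
          rw [fderiv_fun_mul (hm x hx) (hh.differentiableAt x hx)]
          gcongr
          exact (norm_add_le _ _).trans_eq (by simp only [norm_smul, Real.norm_eq_abs])
      _ = |m x| * (‖x‖ * ‖fderiv ℝ h x‖) + ‖x‖ * ‖fderiv ℝ m x‖ * |h x| := by ring
      _ ≤ C * (K' * N) + C' * (|K| * N) :=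
          add_le_add (mul_le_mul (hC x) (hK' x hx) (by positivity) hC0)
            (mul_le_mul (hC' x) hKN (abs_nonneg _) ((by positivity : (0 : ℝ) ≤ _).trans (hC' x)))
      _ = (C * K' + C' * |K|) * N := by ring

/-- The potential energy densities `c |x|ʳ |f|^(2k+2)` of the equation. -/
def powerDensity (c r : ℝ) (k : ℕ) (f : E3 → ℂ) (x : E3) : ℝ :=
  c * ‖x‖ ^ r * (‖f x‖ ^ 2) ^ (k + 1)

variable {x : E3} (c r : ℝ) (k : ℕ)

theorem hasFDerivAt_powerDensity (hx : x ≠ 0) (hf : DifferentiableAt ℝ f x) :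
    HasFDerivAt (powerDensity c r k f)
      ((c * r * ‖x‖ ^ (r - 2) * (‖f x‖ ^ 2) ^ (k + 1)) • innerSL ℝ x +
        (c * ‖x‖ ^ r * (2 * (k + 1)) * (‖f x‖ ^ 2) ^ k) •
          (innerSL ℝ (f x)).comp (fderiv ℝ f x)) x := by
  have h : HasFDerivAt (powerDensity c r k f) _ x :=
    ((hasFDerivAt_norm_rpow_of_ne_zero hx r).const_mul c).mul (hf.hasFDerivAt.norm_sq.pow (k + 1))
  refine h.congr_fderiv ?_
  ext v
  simp only [add_apply, smul_apply, ContinuousLinearMap.comp_apply, nsmul_eq_mul, smul_eq_mul,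
    Nat.cast_ofNat, Nat.cast_add, Nat.cast_one, Nat.add_sub_cancel]
  ring

theorem fderiv_powerDensity_self (hx : x ≠ 0) (hf : DifferentiableAt ℝ f x) :
    fderiv ℝ (powerDensity c r k f) x x =
      r * powerDensity c r k f x +
        c * ‖x‖ ^ r * (2 * (k + 1)) * (‖f x‖ ^ 2) ^ k * ⟪f x, fderiv ℝ f x x⟫_ℝ := by
  rw [(hasFDerivAt_powerDensity c r k hx hf).fderiv]
  simp only [add_apply, smul_apply, ContinuousLinearMap.comp_apply, innerSL_apply_apply,
    real_inner_self_eq_norm_sq, smul_eq_mul, powerDensity,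
    ← norm_rpow_sub_two_mul_norm_sq hx r]
  ring

theorem abs_powerDensity (f : E3 → ℂ) (x : E3) :
    |powerDensity c r k f x| = |c| * ‖x‖ ^ r * ‖f x‖ ^ (2 * k + 1) * ‖f x‖ := by
  rw [powerDensity, abs_mul, abs_mul, abs_of_nonneg (by positivity : 0 ≤ ‖x‖ ^ r),
    abs_of_nonneg (by positivity : 0 ≤ (‖f x‖ ^ 2) ^ (k + 1))]
  ring

theorem norm_mul_norm_fderiv_powerDensity_le (hx : x ≠ 0) (hf : DifferentiableAt ℝ f x) :
    ‖x‖ * ‖fderiv ℝ (powerDensity c r k f) x‖ ≤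
      |c| * ‖x‖ ^ r * ‖f x‖ ^ (2 * k + 1) *
        (|r| * ‖f x‖ + 2 * (k + 1) * (‖x‖ * ‖fderiv ℝ f x‖)) := by
  have hweight : ‖(c * r * ‖x‖ ^ (r - 2) * (‖f x‖ ^ 2) ^ (k + 1)) • innerSL ℝ x‖ =
      |c| * |r| * ‖x‖ ^ (r - 2) * (‖f x‖ ^ 2) ^ (k + 1) * ‖x‖ := by
    rw [norm_smul, innerSL_apply_norm]
    simp [abs_rpow_of_nonneg]
  have hgrad : ‖(c * ‖x‖ ^ r * (2 * (k + 1)) * (‖f x‖ ^ 2) ^ k) •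
        (innerSL ℝ (f x)).comp (fderiv ℝ f x)‖ ≤
      |c| * ‖x‖ ^ r * (2 * (k + 1)) * (‖f x‖ ^ 2) ^ k * (‖f x‖ * ‖fderiv ℝ f x‖) := by
    have hcoeff : ‖c * ‖x‖ ^ r * (2 * (k + 1)) * (‖f x‖ ^ 2) ^ k‖ =
        |c| * ‖x‖ ^ r * (2 * (k + 1)) * (‖f x‖ ^ 2) ^ k := by
      rw [mul_assoc, mul_assoc, norm_mul, Real.norm_eq_abs, Real.norm_of_nonneg (by positivity)]
      ring
    rw [norm_smul, hcoeff]
    gcongr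
    exact (ContinuousLinearMap.opNorm_comp_le _ _).trans_eq (by rw [innerSL_apply_norm])
  rw [(hasFDerivAt_powerDensity c r k hx hf).fderiv]
  calc _ ≤ ‖x‖ * _ := mul_le_mul_of_nonneg_left
        ((norm_add_le _ _).trans (add_le_add hweight.le hgrad)) (norm_nonneg x)
    _ = _ := by rw [← norm_rpow_sub_two_mul_norm_sq hx r]; ring

theorem isControlledBy_powerDensity (hf : Differentiable ℝ f)
    (hbound : ∃ K, ∀ x ≠ 0, |c| * ‖x‖ ^ r * ‖f x‖ ^ (2 * k + 1) ≤ K) :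
    IsControlledBy (powerDensity c r k f) f := by
  obtain ⟨K, hK⟩ := hbound
  refine ⟨fun x hx => (hasFDerivAt_powerDensity c r k hx (hf x)).differentiableAt,
    ⟨K, fun x hx => ?_⟩, ⟨K * (|r| + 2 * (k + 1)), fun x hx => ?_⟩⟩
  · rw [abs_powerDensity]
    gcongr
    exact hK x hx
  · calc _ ≤ _ := norm_mul_norm_fderiv_powerDensity_le c r k hx (hf x)
      _ ≤ K * ((|r| + 2 * (k + 1)) * (‖f x‖ + ‖x‖ * ‖fderiv ℝ f x‖)) := by
          refine mul_le_mul (hK x hx) ?_ (by positivity)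
            ((by positivity : (0 : ℝ) ≤ _).trans (hK x hx))
          rw [mul_add (|r| + 2 * (k + 1))]
          have hr : |r| ≤ |r| + 2 * (k + 1) := le_add_of_nonneg_right (by positivity)
          have hk : 2 * ((k : ℝ) + 1) ≤ |r| + 2 * (k + 1) := le_add_of_nonneg_left (abs_nonneg r)
          refine add_le_add ?_ ?_ <;> gcongr
      _ = _ := by ring

end Singular

section Potential

variable {a b : ℝ} {f F : E3 → ℂ}

/-- The effective potential `a/|x|² + |x|⁻ᵇ|f|²` of the equation with `λ = 1`. -/
def potential (a b : ℝ) (f : E3 → ℂ) (x : E3) : ℝ := a / ‖x‖ ^ 2 + ‖x‖ ^ (-b) * ‖f x‖ ^ 2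

theorem norm_sq_mul_potential (a b : ℝ) (f : E3 → ℂ) {x : E3} (hx : x ≠ 0) :
    ‖x‖ ^ 2 * potential a b f x = a + ‖x‖ ^ (2 - b) * ‖f x‖ ^ 2 := by
  have hpow : ‖x‖ ^ 2 * ‖x‖ ^ (-b) = ‖x‖ ^ (2 - b) := by
    rw [mul_comm, ← rpow_add_natCast (norm_ne_zero_iff.2 hx), Nat.cast_ofNat, neg_add_eq_sub]
  rw [potential, mul_add, mul_div_cancel₀ a (by positivity), ← mul_assoc, hpow]

theorem norm_rpow_mul_potential_zero (b : ℝ) (f : E3 → ℂ) {x : E3} (hx : x ≠ 0) :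
    ‖x‖ ^ b * potential 0 b f x = ‖f x‖ ^ 2 := by
  rw [potential, zero_div, zero_add, ← mul_assoc, ← rpow_add (norm_pos_iff.2 hx), add_neg_cancel,
    rpow_zero, one_mul]

theorem apply_zero_eq_zero_of_eq_potential_smul (hb0 : 0 < b) (hb2 : b < 2) (hf : Continuous f)
    (hF : Continuous F) (hFf : ∀ x ≠ 0, F x = potential a b f x • f x) : f 0 = 0 := by
  have hdense : Dense ({0}ᶜ : Set E3) := dense_compl_singleton 0
  have hnorm : ∀ {r : ℝ}, 0 < r → Continuous fun x : E3 => ‖x‖ ^ r := fun hr =>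
    continuous_norm.rpow_const fun _ => Or.inr hr.le
  rcases eq_or_ne a 0 with rfl | ha
  · have hEq : (fun x => ‖x‖ ^ b • F x) = fun x => ‖f x‖ ^ 2 • f x := by
      refine ((hnorm hb0).fun_smul hF).ext_on hdense ((hf.norm.fun_pow 2).fun_smul hf)
        fun x hx => ?_
      beta_reduce
      rw [hFf x hx, smul_smul, norm_rpow_mul_potential_zero b f hx]
    simpa [zero_rpow hb0.ne'] using (congrFun hEq 0).symm
  · have hEq : (fun x => ‖x‖ ^ 2 • F x) = fun x => (a + ‖x‖ ^ (2 - b) * ‖f x‖ ^ 2) • f x := by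
      refine ((continuous_norm.fun_pow 2).fun_smul hF).ext_on hdense
        ((continuous_const.fun_add
          ((hnorm (sub_pos.2 hb2)).fun_mul (hf.norm.fun_pow 2))).fun_smul hf)
        fun x hx => ?_
      beta_reduce
      rw [hFf x hx, smul_smul, norm_sq_mul_potential a b f hx]
    simpa [zero_rpow (sub_pos.2 hb2).ne', ha] using congrFun hEq 0

theorem IsSchwartz.exists_norm_rpow_mul_cube_le (hf : IsSchwartz f) (hf0 : f 0 = 0) (hb0 : 0 ≤ b)
    (hb3 : b ≤ 3) : ∃ K, ∀ x ≠ 0, ‖x‖ ^ (-b) * ‖f x‖ ^ 3 ≤ K := by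
  obtain ⟨L, hL⟩ := hf.exists_norm_le_mul_norm hf0
  obtain ⟨C, hC⟩ := hf.exists_norm_le
  have : 0 ≤ C := (norm_nonneg _).trans (hC 0)
  refine ⟨max (|L| ^ 3) (C ^ 3), fun x hx => ?_⟩
  have hx0 : 0 < ‖x‖ := norm_pos_iff.2 hx
  rcases le_total ‖x‖ 1 with hx1 | hx1
  · refine le_max_of_le_left ?_
    calc ‖x‖ ^ (-b) * ‖f x‖ ^ 3 ≤ ‖x‖ ^ (-3 : ℝ) * (|L| * ‖x‖) ^ 3 := by
          gcongr ?_ * ?_ ^ 3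
          · exact rpow_le_rpow_of_exponent_ge hx0 hx1 (neg_le_neg hb3)
          · exact (hL x).trans (by gcongr; exact le_abs_self L)
      _ = |L| ^ 3 := by
          rw [rpow_neg hx0.le, rpow_ofNat]
          field_simp
  · refine le_max_of_le_right ?_
    calc ‖x‖ ^ (-b) * ‖f x‖ ^ 3 ≤ 1 * C ^ 3 := by
          gcongr
          · exact rpow_le_one_of_one_le_of_nonpos hx1 (neg_nonpos.2 hb0)
          · exact hC x
      _ = C ^ 3 := one_mul _

theorem IsSchwartz.exists_inverseSquare_mul_norm_le (hf : IsSchwartz f) (hf0 : f 0 = 0)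
    (hb0 : 0 ≤ b) (hb3 : b ≤ 3) (hF : IsSchwartz F)
    (hFf : ∀ x ≠ 0, F x = potential a b f x • f x) :
    ∃ K, ∀ x ≠ 0, |a| * ‖x‖ ^ (-2 : ℝ) * ‖f x‖ ≤ K := by
  obtain ⟨C, hC⟩ := hF.exists_norm_le
  obtain ⟨K, hK⟩ := hf.exists_norm_rpow_mul_cube_le hf0 hb0 hb3
  refine ⟨C + K, fun x hx => ?_⟩
  have hsing : (a / ‖x‖ ^ 2) • f x = F x - (‖x‖ ^ (-b) * ‖f x‖ ^ 2) • f x := by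
    rw [hFf x hx, potential, add_smul, add_sub_cancel_right]
  calc |a| * ‖x‖ ^ (-2 : ℝ) * ‖f x‖ = ‖(a / ‖x‖ ^ 2) • f x‖ := by
        rw [norm_smul, norm_div, Real.norm_eq_abs, rpow_neg (norm_nonneg x), rpow_ofNat,
          norm_pow, norm_norm, div_eq_mul_inv]
    _ ≤ ‖F x‖ + ‖(‖x‖ ^ (-b) * ‖f x‖ ^ 2) • f x‖ := hsing ▸ norm_sub_le _ _
    _ = ‖F x‖ + ‖x‖ ^ (-b) * ‖f x‖ ^ 3 := by
        rw [norm_smul, Real.norm_of_nonneg (by positivity)]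
        ring
    _ ≤ C + K := add_le_add (hC x) (hK x hx)

end Potential

section HardyWeight

/-- The radial weight `ρ + κ ρ³`, `ρ = ⟨s x⟩⁻¹`. The parameter `κ` measures how much of the kinetic
energy is spent, through Hardy's inequality, on an attractive inverse-square potential. -/
def hardyWeight (s κ : ℝ) (x : E3) : ℝ := invBracket s x + κ * invBracket s x ^ 3

variable (s κ : ℝ) (x : E3)

theorem hasFDerivAt_hardyWeight : HasFDerivAt (hardyWeight s κ)
    ((-(s ^ 2 * invBracket s x ^ 3) * (1 + 3 * κ * invBracket s x ^ 2)) • innerSL ℝ x) x := by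
  have hρ := hasFDerivAt_invBracket s x
  refine (hρ.add ((hρ.pow 3).const_mul κ)).congr_fderiv ?_
  ext v
  simp only [add_apply, smul_apply, smul_eq_mul, nsmul_eq_mul, Nat.cast_ofNat, Nat.add_one_sub_one]
  ring

theorem abs_hardyWeight_le : |hardyWeight s κ x| ≤ 1 + |κ| := by
  have hρ := invBracket_pos s x
  have hρ1 := invBracket_le_one s x
  calc |hardyWeight s κ x| ≤ |invBracket s x| + |κ * invBracket s x ^ 3| := abs_add_le _ _
    _ = invBracket s x + |κ| * invBracket s x ^ 3 := by
        rw [abs_mul, abs_of_pos hρ, abs_of_pos (pow_pos hρ 3)]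
    _ ≤ 1 + |κ| * 1 := by gcongr; exact pow_le_one₀ hρ.le hρ1
    _ = 1 + |κ| := by rw [mul_one]

theorem norm_mul_norm_fderiv_hardyWeight_le :
    ‖x‖ * ‖fderiv ℝ (hardyWeight s κ) x‖ ≤ 1 + 3 * |κ| := by
  have hρ := invBracket_pos s x
  have hρ1 := invBracket_le_one s x
  have hfactor : |1 + 3 * κ * invBracket s x ^ 2| ≤ 1 + 3 * |κ| := by
    refine (abs_add_le _ _).trans ?_
    rw [abs_one, abs_mul, abs_mul, abs_of_pos (pow_pos hρ 2), abs_of_pos (three_pos : (0 : ℝ) < 3)]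
    exact add_le_add_right
      (mul_le_of_le_one_right (by positivity) (pow_le_one₀ hρ.le hρ1)) 1
  have hweight : s ^ 2 * invBracket s x ^ 3 * ‖x‖ ^ 2 ≤ 1 := by
    nlinarith [invBracket_sq_mul s x]
  calc ‖x‖ * ‖fderiv ℝ (hardyWeight s κ) x‖
      = s ^ 2 * invBracket s x ^ 3 * ‖x‖ ^ 2 * |1 + 3 * κ * invBracket s x ^ 2| := by
        rw [(hasFDerivAt_hardyWeight s κ x).fderiv, norm_smul, innerSL_apply_norm, norm_mul,
          norm_neg, Real.norm_of_nonneg (by positivity), Real.norm_eq_abs]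
        ring
    _ ≤ 1 * (1 + 3 * |κ|) := by gcongr
    _ = 1 + 3 * |κ| := one_mul _

theorem IsControlledBy.hardyWeight_mul {h : E3 → ℝ} {f : E3 → ℂ} (hh : IsControlledBy h f) :
    IsControlledBy (fun y => hardyWeight s κ y * h y) f :=
  hh.mul (fun y _ => (hasFDerivAt_hardyWeight s κ y).differentiableAt)
    ⟨_, abs_hardyWeight_le s κ⟩ ⟨_, norm_mul_norm_fderiv_hardyWeight_le s κ⟩

variable {x} in
theorem divergence_hardyWeight_mul_smul_self {p : E3 → ℝ} (hp : DifferentiableAt ℝ p x) :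
    divergence (fun y => (hardyWeight s κ y * p y) • y) x =
      (2 * invBracket s x + invBracket s x ^ 3 + 3 * κ * invBracket s x ^ 5) * p x +
        hardyWeight s κ x * fderiv ℝ p x x := by
  have hw := hasFDerivAt_hardyWeight s κ x
  rw [divergence_smul_self (hw.differentiableAt.fun_mul hp), fderiv_fun_mul hw.differentiableAt hp,
    hw.fderiv]
  simp only [add_apply, smul_apply, innerSL_apply_apply, real_inner_self_eq_norm_sq, smul_eq_mul,
    hardyWeight]
  linear_combination
    -(invBracket s x * (1 + 3 * κ * invBracket s x ^ 2) * p x) * invBracket_sq_mul s x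

end HardyWeight

section Pointwise

variable {a b s κ : ℝ} {f g : E3 → ℂ} {x : E3}

/-- The remainder of `momentumDensity_add_swap` for the virial field after the singular currents
`hardyWeight s κ · a|x|⁻²|f|² x` and `hardyWeight s 0 · ½|x|⁻ᵇ|f|⁴ x` have been removed. -/
def virialRemainder (a b s κ : ℝ) (f g : E3 → ℂ) (x : E3) : ℝ :=
  momentumDensity (virialField s) g f x + momentumDensity (virialField s) f g x -
    divergence (morawetzCurrent (virialField s) f g) x -
    divergence (fun y => (hardyWeight s κ y * powerDensity a (-2) 0 f y) • y) x -
    divergence (fun y => (hardyWeight s 0 y * powerDensity (1 / 2) (-b) 1 f y) • y) x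

theorem virialRemainder_eq (κ : ℝ) (hx : x ≠ 0) (hf : ContDiff ℝ 2 f)
    (hg : DifferentiableAt ℝ g x) (heq : Complex.I * g x + lap f x = potential a b f x • f x) :
    virialRemainder a b s κ f g x =
      2 * gradForm (virialField s) f x -
        s ^ 2 * (2 * invBracket s x ^ 3 + 3 * invBracket s x ^ 5) * ⟪f x, fderiv ℝ f x x⟫_ℝ +
        a / ‖x‖ ^ 2 * (-(2 * κ * invBracket s x ^ 3) * ⟪f x, fderiv ℝ f x x⟫_ℝ +
          (2 * invBracket s x + 2 * κ * invBracket s x ^ 3 - 3 * κ * invBracket s x ^ 5) *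
            ‖f x‖ ^ 2) +
        1 / 2 * ((2 + b) * invBracket s x + invBracket s x ^ 3) * (‖f x‖ ^ 4 * ‖x‖ ^ (-b)) := by
  have hf' : DifferentiableAt ℝ f x := hf.differentiable (by norm_num) x
  have hd : ∀ c r k, DifferentiableAt ℝ (powerDensity c r k f) x := fun c r k =>
    (hasFDerivAt_powerDensity c r k hx hf').differentiableAt
  have hpow : ‖x‖ ^ (-2 : ℝ) = 1 / ‖x‖ ^ 2 := by
    rw [rpow_neg (norm_nonneg x), rpow_ofNat, one_div]
  rw [virialRemainder, momentumDensity_add_swap (contDiff_virialField s) hf hg heq,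
    sum_pdR_divergence_virialField, inner_multiplier_virialField,
    divergence_hardyWeight_mul_smul_self s κ (hd _ _ _),
    divergence_hardyWeight_mul_smul_self s 0 (hd _ _ _),
    fderiv_powerDensity_self _ _ _ hx hf', fderiv_powerDensity_self _ _ _ hx hf']
  simp only [powerDensity, hardyWeight, potential, hpow]
  push_cast
  ring

theorem invBracket_cube_mul_gradSq_le_gradForm (f : E3 → ℂ) (x : E3) :
    invBracket s x ^ 3 * gradSq f x ≤ gradForm (virialField s) f x := by
  have hQ := norm_fderiv_apply_sq_le f x x
  have hρ := invBracket_pos s x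
  calc invBracket s x ^ 3 * gradSq f x
      = invBracket s x * gradSq f x -
          s ^ 2 * invBracket s x ^ 3 * (‖x‖ ^ 2 * gradSq f x) := by
        linear_combination invBracket s x * gradSq f x * invBracket_sq_mul s x
    _ ≤ invBracket s x * gradSq f x - s ^ 2 * invBracket s x ^ 3 * ‖fderiv ℝ f x x‖ ^ 2 := by
        gcongr
    _ = _ := (gradForm_virialField s x f).symm

theorem pointwise_hardy (f : E3 → ℂ) (hx : x ≠ 0) :
    0 ≤ gradSq f x + (⟪f x, fderiv ℝ f x x⟫_ℝ + ‖f x‖ ^ 2 / 4) / ‖x‖ ^ 2 := by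
  have hsq : 0 ≤ ‖fderiv ℝ f x x‖ ^ 2 + ⟪f x, fderiv ℝ f x x⟫_ℝ + ‖f x‖ ^ 2 / 4 := by
    have h := sq_nonneg ‖fderiv ℝ f x x + (1 / 2 : ℝ) • f x‖
    rw [norm_add_sq_real, norm_smul, real_inner_smul_right, real_inner_comm, mul_pow,
      norm_div, norm_one, Real.norm_ofNat] at h
    linarith
  calc 0 ≤ (‖fderiv ℝ f x x‖ ^ 2 + ⟪f x, fderiv ℝ f x x⟫_ℝ + ‖f x‖ ^ 2 / 4) / ‖x‖ ^ 2 := by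
        positivity
    _ ≤ (‖x‖ ^ 2 * gradSq f x + (⟪f x, fderiv ℝ f x x⟫_ℝ + ‖f x‖ ^ 2 / 4)) / ‖x‖ ^ 2 := by
        rw [add_assoc]
        gcongr
        exact norm_fderiv_apply_sq_le f x x
    _ = _ := by rw [add_div, mul_div_cancel_left₀ _ (by positivity)]

theorem inverseSquare_remainder_ge (f : E3 → ℂ) (hx : x ≠ 0) (h0 : 0 ≤ -(a * κ))
    (h1 : -(a * κ) ≤ 1) (h4 : a * κ ≤ 4 * a) :
    -(7 / 2 * s ^ 2 * ‖f x‖ ^ 2) ≤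
      2 * (invBracket s x ^ 3 * gradSq f x) +
        a / ‖x‖ ^ 2 * (-(2 * κ * invBracket s x ^ 3) * ⟪f x, fderiv ℝ f x x⟫_ℝ +
          (2 * invBracket s x + 2 * κ * invBracket s x ^ 3 - 3 * κ * invBracket s x ^ 5) *
            ‖f x‖ ^ 2) := by
  set ρ := invBracket s x
  set Y := ⟪f x, fderiv ℝ f x x⟫_ℝ
  set N := ‖f x‖ ^ 2
  have hρ : 0 < ρ := invBracket_pos s x
  have hρ1 : ρ ≤ 1 := invBracket_le_one s x
  have hcancel : (1 / ‖x‖ ^ 2) * ‖x‖ ^ 2 = 1 := one_div_mul_cancel (by positivity)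
  have hρ3 : ρ ^ 3 * (1 / ‖x‖ ^ 2) = ρ * (1 / ‖x‖ ^ 2) - s ^ 2 * ρ ^ 3 := by
    linear_combination ρ * (1 / ‖x‖ ^ 2) * invBracket_sq_mul s x - s ^ 2 * ρ ^ 3 * hcancel
  have hhardy : 0 ≤ 2 * (-(a * κ)) * ρ ^ 3 * (gradSq f x + (Y + N / 4) / ‖x‖ ^ 2) :=
    mul_nonneg (by positivity) (pointwise_hardy f hx)
  have hkinetic : 0 ≤ 2 * (1 - -(a * κ)) * ρ ^ 3 * gradSq f x :=
    mul_nonneg (mul_nonneg (by linarith) (by positivity)) (gradSq_nonneg f x)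
  have hcharge : 0 ≤ 1 / 2 * (4 * a - a * κ) * ρ * (1 / ‖x‖ ^ 2) * N := by
    have : 0 ≤ 4 * a - a * κ := sub_nonneg.2 h4
    positivity
  have herror : -(a * κ) * (1 / 2 * ρ ^ 3 + 3 * ρ ^ 5) * (s ^ 2 * N) ≤ 7 / 2 * (s ^ 2 * N) := by
    have hρ3' : ρ ^ 3 ≤ 1 := pow_le_one₀ hρ.le hρ1
    have hρ5' : ρ ^ 5 ≤ 1 := pow_le_one₀ hρ.le hρ1
    gcongr
    calc -(a * κ) * (1 / 2 * ρ ^ 3 + 3 * ρ ^ 5) ≤ 1 * (1 / 2 * 1 + 3 * 1) := by gcongr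
      _ = 7 / 2 := by norm_num
  linear_combination hhardy + hkinetic + hcharge + herror +
    a * κ * N * (1 / 2 + 3 * ρ ^ 2) * hρ3

theorem sq_mul_invBracket_mul_inner_le (hs : 0 ≤ s) (f : E3 → ℂ) (x : E3) :
    s ^ 2 * (2 * invBracket s x ^ 3 + 3 * invBracket s x ^ 5) * ⟪f x, fderiv ℝ f x x⟫_ℝ ≤
      5 / 2 * s * (‖f x‖ ^ 2 + gradSq f x) := by
  set ρ := invBracket s x
  have hρ : 0 < ρ := invBracket_pos s x
  have hρ1 : ρ ≤ 1 := invBracket_le_one s x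
  have hQ : (s * ρ * ‖fderiv ℝ f x x‖) ^ 2 ≤ gradSq f x := by
    calc (s * ρ * ‖fderiv ℝ f x x‖) ^ 2 = s ^ 2 * ρ ^ 2 * ‖fderiv ℝ f x x‖ ^ 2 := by ring
      _ ≤ s ^ 2 * ρ ^ 2 * (‖x‖ ^ 2 * gradSq f x) := by
          gcongr
          exact norm_fderiv_apply_sq_le f x x
      _ = gradSq f x - ρ ^ 2 * gradSq f x := by
          linear_combination gradSq f x * invBracket_sq_mul s x
      _ ≤ gradSq f x := sub_le_self _ (mul_nonneg (by positivity) (gradSq_nonneg f x))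
  have hweight : 2 * ρ ^ 3 + 3 * ρ ^ 5 ≤ 5 * ρ := by
    have hρ3 : ρ ^ 3 ≤ ρ := pow_le_of_le_one hρ.le hρ1 (by norm_num)
    have hρ5 : ρ ^ 5 ≤ ρ := pow_le_of_le_one hρ.le hρ1 (by norm_num)
    linarith
  calc s ^ 2 * (2 * ρ ^ 3 + 3 * ρ ^ 5) * ⟪f x, fderiv ℝ f x x⟫_ℝ
      ≤ s ^ 2 * (2 * ρ ^ 3 + 3 * ρ ^ 5) * (‖f x‖ * ‖fderiv ℝ f x x‖) := by
        gcongr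
        exact real_inner_le_norm (f x) (fderiv ℝ f x x)
    _ ≤ s ^ 2 * (5 * ρ) * (‖f x‖ * ‖fderiv ℝ f x x‖) := by gcongr
    _ = 5 / 2 * s * (2 * ‖f x‖ * (s * ρ * ‖fderiv ℝ f x x‖)) := by ring
    _ ≤ 5 / 2 * s * (‖f x‖ ^ 2 + (s * ρ * ‖fderiv ℝ f x x‖) ^ 2) := by
        gcongr
        exact two_mul_le_add_sq _ _
    _ ≤ 5 / 2 * s * (‖f x‖ ^ 2 + gradSq f x) := by gcongr

theorem one_le_two_mul_invBracket (hs : 0 < s) (hx : ‖x‖ ≤ s⁻¹) : 1 ≤ 2 * invBracket s x := by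
  have hρ := invBracket_pos s x
  have hsx : (s * ‖x‖) ^ 2 ≤ 1 := by
    refine pow_le_one₀ (by positivity) ?_
    rwa [mul_comm, ← le_inv_mul_iff₀' hs, mul_one]
  have hsq : 1 ≤ 2 * invBracket s x ^ 2 := by
    nlinarith [invBracket_sq_mul s x, pow_pos hρ 2]
  linarith [pow_le_of_le_one hρ.le (invBracket_le_one s x) two_ne_zero]

theorem le_virialRemainder (hs : 0 < s) (hs1 : s ≤ 1) (ha : -(1 / 4) ≤ a) (hb0 : 0 ≤ b)
    (hx : x ≠ 0) (hf : ContDiff ℝ 2 f) (hg : DifferentiableAt ℝ g x)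
    (heq : Complex.I * g x + lap f x = potential a b f x • f x) :
    1 / 2 * (Metric.closedBall 0 s⁻¹).indicator (fun y => ‖f y‖ ^ 4 * ‖y‖ ^ (-b)) x -
        6 * s * (‖f x‖ ^ 2 + gradSq f x) ≤
      virialRemainder a b s (if a < 0 then 4 else 0) f g x := by
  have hpotential : 1 / 2 * (Metric.closedBall 0 s⁻¹).indicator
        (fun y => ‖f y‖ ^ 4 * ‖y‖ ^ (-b)) x ≤
      1 / 2 * ((2 + b) * invBracket s x + invBracket s x ^ 3) * (‖f x‖ ^ 4 * ‖x‖ ^ (-b)) := by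
    have hρ := invBracket_pos s x
    rw [mul_assoc]
    gcongr
    refine Set.indicator_apply_le' (fun hxs => ?_) fun _ => by positivity
    have hge := one_le_two_mul_invBracket hs (mem_closedBall_zero_iff.1 hxs)
    refine le_mul_of_one_le_left (by positivity) ?_
    linarith [mul_nonneg hb0 hρ.le, pow_pos hρ 3]
  -- With `κ = 4` the terms in `a|x|⁻²ρ|f|²` cancel; for `a ≥ 0` they have the right sign.
  have hhardy := inverseSquare_remainder_ge (a := a) (s := s) (κ := if a < 0 then 4 else 0) f hx
    (by split_ifs <;> linarith) (by split_ifs <;> linarith) (by split_ifs <;> linarith)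
  have hkinetic := invBracket_cube_mul_gradSq_le_gradForm (s := s) f x
  have hcross := sq_mul_invBracket_mul_inner_le hs.le f x
  have hs2 : s ^ 2 * ‖f x‖ ^ 2 ≤ s * ‖f x‖ ^ 2 := by
    gcongr
    exact pow_le_of_le_one hs.le hs1 two_ne_zero
  have hsG : 0 ≤ s * gradSq f x := mul_nonneg hs.le (gradSq_nonneg f x)
  rw [virialRemainder_eq _ hx hf hg heq]
  linarith

end Pointwise

section Integrated

variable {a b : ℝ} {f g : E3 → ℂ}

theorem IsSchwartz.lap (hf : IsSchwartz f) : IsSchwartz (lap f) :=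
  IsSchwartz.sum fun j _ => (hf.pd j).pd j

theorem IsSchwartz.integrable_norm_sq_add_gradSq (hf : IsSchwartz f) :
    Integrable fun x => ‖f x‖ ^ 2 + _root_.gradSq f x := by
  simpa only [real_inner_self_eq_norm_sq] using ((hf.inner hf).add hf.gradSq).integrable

theorem integrable_divergence_morawetzCurrent {X : E3 → E3} (hX : X.HasTemperateGrowth)
    (hf : IsSchwartz f) (hg : IsSchwartz g) : Integrable (divergence (morawetzCurrent X f g)) :=
  have hM := hf.morawetzCurrent hg hX
  integrable_divergence hM.differentiable hM.fderiv.integrable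

theorem integral_divergence_morawetzCurrent {X : E3 → E3} (hX : X.HasTemperateGrowth)
    (hf : IsSchwartz f) (hg : IsSchwartz g) : ∫ x, divergence (morawetzCurrent X f g) x = 0 :=
  have hM := hf.morawetzCurrent hg hX
  integral_divergence_eq_zero hM.differentiable hM.integrable hM.fderiv.integrable

variable (hb0 : 0 < b) (hb2 : b < 2) (hf : IsSchwartz f) (hg : IsSchwartz g)
  (heq : ∀ x ≠ 0, Complex.I * g x + lap f x = potential a b f x • f x)
include hb0 hb2 hf hg heq

theorem apply_zero_eq_zero_of_equation : f 0 = 0 :=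
  apply_zero_eq_zero_of_eq_potential_smul hb0 hb2 hf.continuous
    ((hg.clm_comp (ContinuousLinearMap.mul ℝ ℂ Complex.I)).add hf.lap).continuous heq

theorem isControlledBy_inverseSquareDensity : IsControlledBy (powerDensity a (-2) 0 f) f := by
  refine isControlledBy_powerDensity a (-2) 0 hf.differentiable ?_
  simpa using hf.exists_inverseSquare_mul_norm_le
    (apply_zero_eq_zero_of_equation hb0 hb2 hf hg heq) hb0.le (by linarith)
    ((hg.clm_comp (ContinuousLinearMap.mul ℝ ℂ Complex.I)).add hf.lap) heq

omit hg heq in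
theorem isControlledBy_nonlinearDensity (hf0 : f 0 = 0) :
    IsControlledBy (powerDensity (1 / 2) (-b) 1 f) f := by
  refine isControlledBy_powerDensity (1 / 2) (-b) 1 hf.differentiable ?_
  obtain ⟨K, hK⟩ := hf.exists_norm_rpow_mul_cube_le hf0 hb0.le (by linarith : b ≤ 3)
  exact ⟨|1 / 2| * K, fun x hx => by rw [mul_assoc]; gcongr; exact hK x hx⟩

theorem integrable_and_integral_virialRemainder (s κ : ℝ) :
    Integrable (virialRemainder a b s κ f g) ∧ ∫ x, virialRemainder a b s κ f g x =
      ∫ x, (momentumDensity (virialField s) g f x + momentumDensity (virialField s) f g x) := by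
  have hX := hasTemperateGrowth_virialField s
  have hf0 := apply_zero_eq_zero_of_equation hb0 hb2 hf hg heq
  have hcharge := (isControlledBy_inverseSquareDensity hb0 hb2 hf hg heq).hardyWeight_mul s κ
  have hnonlin := (isControlledBy_nonlinearDensity hb0 hb2 hf hf0).hardyWeight_mul s 0
  have hmomentum := ((hg.momentumDensity hf hX).add (hf.momentumDensity hg hX)).integrable
    (μ := volume)
  have hsmooth := integrable_divergence_morawetzCurrent hX hf hg
  have hcharge_int := hcharge.integrable_divergence_smul_self hf hf0
  have hnonlin_int := hnonlin.integrable_divergence_smul_self hf hf0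
  refine ⟨((hmomentum.sub' hsmooth).sub' hcharge_int).sub' hnonlin_int, ?_⟩
  simp only [virialRemainder]
  rw [integral_sub ((hmomentum.sub' hsmooth).sub' hcharge_int) hnonlin_int,
    integral_sub (hmomentum.sub' hsmooth) hcharge_int, integral_sub hmomentum hsmooth,
    integral_divergence_morawetzCurrent hX hf hg, hcharge.integral_divergence_smul_self hf hf0,
    hnonlin.integral_divergence_smul_self hf hf0, sub_zero, sub_zero, sub_zero]

theorem potentialEnergy_le_of_equation {s : ℝ} (hs : 0 < s) (hs1 : s ≤ 1) (ha : -(1 / 4) ≤ a) :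
    1 / 2 * ∫ x in Metric.closedBall 0 s⁻¹, ‖f x‖ ^ 4 * ‖x‖ ^ (-b) ≤
      (∫ x, (momentumDensity (virialField s) g f x + momentumDensity (virialField s) f g x)) +
        6 * s * ∫ x, (‖f x‖ ^ 2 + gradSq f x) := by
  set κ : ℝ := if a < 0 then 4 else 0
  obtain ⟨hint, heq_int⟩ := integrable_and_integral_virialRemainder hb0 hb2 hf hg heq s κ
  have henergy := hf.integrable_norm_sq_add_gradSq.const_mul (6 * s)
  rw [← integral_indicator Metric.isClosed_closedBall.measurableSet, ← heq_int,
    ← integral_const_mul, ← integral_const_mul, ← integral_add hint henergy]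
  refine integral_mono_of_nonneg (ae_of_all _ fun x => ?_) (hint.add henergy) ?_
  · exact mul_nonneg (by norm_num) (Set.indicator_nonneg (fun y _ => by positivity) x)
  · filter_upwards [compl_mem_ae_iff.2 (measure_singleton (0 : E3))] with x hx
    exact sub_le_iff_le_add.1 (le_virialRemainder hs hs1 ha hb0.le hx
      (contDiff_infty.1 hf.contDiff 2) (hg.differentiable x) (heq x hx))

end Integrated

section TimeDerivative

variable {V F : Type*} [NormedAddCommGroup V] [NormedSpace ℝ V] [NormedAddCommGroup F]
  [NormedSpace ℝ F] {u : ℝ → V → F}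

/-- The time derivative `∂ₜu` of a family of functions, taken pointwise in space. -/
def timeDeriv (u : ℝ → V → F) (t : ℝ) (x : V) : F := deriv (fun s => u s x) t

theorem hasDerivAt_comp_prodMk {G : Type*} [NormedAddCommGroup G] [NormedSpace ℝ G]
    {Φ : ℝ × V → G} {t : ℝ} {x : V} (hΦ : DifferentiableAt ℝ Φ (t, x)) :
    HasDerivAt (fun s => Φ (s, x)) (fderiv ℝ Φ (t, x) (1, 0)) t :=
  hΦ.hasFDerivAt.comp_hasDerivAt t ((hasDerivAt_id t).prodMk (hasDerivAt_const t x))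

theorem fderiv_comp_prodMk_left {Φ : ℝ × V → F} {t : ℝ} {x : V}
    (hΦ : DifferentiableAt ℝ Φ (t, x)) (v : V) :
    fderiv ℝ (fun y => Φ (t, y)) x v = fderiv ℝ Φ (t, x) (0, v) := by
  have h : HasFDerivAt (fun y => Φ (t, y)) _ x :=
    hΦ.hasFDerivAt.comp x (hasFDerivAt_prodMk_right t x)
  rw [h.fderiv]
  rfl

theorem hasDerivAt_timeDeriv (hu : Differentiable ℝ (Function.uncurry u)) (t : ℝ) (x : V) :
    HasDerivAt (fun s => u s x) (timeDeriv u t x) t :=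
  (hasDerivAt_comp_prodMk (Φ := Function.uncurry u) (hu (t, x))).differentiableAt.hasDerivAt

theorem hasDerivAt_fderiv_apply (hu : ContDiff ℝ 2 (Function.uncurry u)) (t : ℝ) (x v : V) :
    HasDerivAt (fun s => fderiv ℝ (u s) x v) (fderiv ℝ (timeDeriv u t) x v) t := by
  set U := Function.uncurry u
  have hU : Differentiable ℝ U := hu.differentiable two_ne_zero
  have hU' : DifferentiableAt ℝ (fderiv ℝ U) (t, x) :=
    (hu.fderiv_right (m := 1) (by norm_num)).differentiable one_ne_zero _
  have happly : ∀ w, HasFDerivAt (fun z => fderiv ℝ U z w)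
      ((ContinuousLinearMap.apply ℝ F w).comp (fderiv ℝ (fderiv ℝ U) (t, x))) (t, x) := fun w =>
    (ContinuousLinearMap.apply ℝ F w).hasFDerivAt.comp (t, x) hU'.hasFDerivAt
  have hspace : (fun s => fderiv ℝ (u s) x v) = fun s => fderiv ℝ U (s, x) (0, v) :=
    funext fun s => fderiv_comp_prodMk_left (Φ := U) (hU _) v
  have htime : timeDeriv u t = fun y => fderiv ℝ U (t, y) (1, 0) :=
    funext fun y => (hasDerivAt_comp_prodMk (hU (t, y))).deriv
  have hsymm : fderiv ℝ (timeDeriv u t) x v = fderiv ℝ (fderiv ℝ U) (t, x) (1, 0) (0, v) := by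
    rw [htime, fderiv_comp_prodMk_left (Φ := fun z => fderiv ℝ U z (1, 0))
      (happly _).differentiableAt, (happly _).fderiv]
    exact (hu.contDiffAt.isSymmSndFDerivAt (by simp)).eq _ _
  have hchain := hasDerivAt_comp_prodMk (happly (0, v)).differentiableAt
  rw [(happly _).fderiv] at hchain
  rw [hspace, hsymm]
  exact hchain

end TimeDerivative

section MomentumDerivative

variable {u : ℝ → E3 → ℂ} {X : E3 → E3}

theorem hasDerivAt_momentumDensity (hu : ContDiff ℝ 2 (Function.uncurry u)) (X : E3 → E3) (t : ℝ)
    (x : E3) :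
    HasDerivAt (fun s => momentumDensity X (u s) (u s) x)
      (momentumDensity X (timeDeriv u t) (u t) x + momentumDensity X (u t) (timeDeriv u t) x)
      t := by
  have h := ((hasDerivAt_timeDeriv (hu.differentiable two_ne_zero) t x).const_mul Complex.I).inner ℝ
    (hasDerivAt_fderiv_apply hu t x (X x))
  rw [add_comm]
  exact h

theorem abs_momentumDensity_le (X : E3 → E3) (f g : E3 → ℂ) (x : E3) :
    |momentumDensity X f g x| ≤ ‖f x‖ * ‖fderiv ℝ g x (X x)‖ := by
  refine (abs_real_inner_le_norm _ _).trans_eq ?_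
  rw [norm_mul, Complex.norm_I, one_mul]

variable {a b lam : ℝ}

theorem norm_le_mul_one_add_norm_rpow {V W : Type*} [NormedAddCommGroup V] [NormedAddCommGroup W]
    {x : V} {w : W} {C₀ C₄ : ℝ} (h₀ : ‖w‖ ≤ C₀) (h₄ : ‖x‖ ^ 4 * ‖w‖ ≤ C₄) :
    ‖w‖ ≤ 8 * (C₀ + C₄) * (1 + ‖x‖) ^ (-4 : ℝ) := by
  rw [rpow_neg (by positivity), rpow_ofNat, ← div_eq_mul_inv, le_div_iff₀ (by positivity)]
  calc ‖w‖ * (1 + ‖x‖) ^ 4 ≤ ‖w‖ * (2 ^ 3 * (1 ^ 4 + ‖x‖ ^ 4)) := by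
        gcongr
        exact add_pow_le zero_le_one (norm_nonneg x) 4
    _ = 8 * (‖w‖ + ‖x‖ ^ 4 * ‖w‖) := by ring
    _ ≤ 8 * (C₀ + C₄) := by gcongr

theorem IsSchwartzSolution.exists_decay_bound (hu : IsSchwartzSolution a b lam u) {T : ℝ}
    (hT : 0 < T) : ∃ C, ∀ t ∈ Set.Icc (-T) T, ∀ x, ‖u t x‖ ≤ C * (1 + ‖x‖) ^ (-4 : ℝ) ∧
      ‖timeDeriv u t x‖ ≤ C * (1 + ‖x‖) ^ (-4 : ℝ) := by
  obtain ⟨C₀, h₀⟩ := hu.unif_bound 0 0 T hT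
  obtain ⟨C₄, h₄⟩ := hu.unif_bound 4 0 T hT
  simp only [pow_zero, one_mul, norm_iteratedFDeriv_zero] at h₀ h₄
  refine ⟨8 * (C₀ + C₄), fun t ht x => ⟨?_, ?_⟩⟩
  · exact norm_le_mul_one_add_norm_rpow ((le_add_of_nonneg_right (norm_nonneg _)).trans (h₀ t ht x))
      ((le_add_of_nonneg_right (by positivity)).trans (h₄ t ht x))
  · exact norm_le_mul_one_add_norm_rpow ((le_add_of_nonneg_left (norm_nonneg _)).trans (h₀ t ht x))
      ((le_add_of_nonneg_left (by positivity)).trans (h₄ t ht x))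

theorem IsSchwartzSolution.exists_fderiv_bound (hu : IsSchwartzSolution a b lam u) {T : ℝ}
    (hT : 0 < T) : ∃ C, ∀ t ∈ Set.Icc (-T) T, ∀ x, ‖fderiv ℝ (u t) x‖ ≤ C ∧
      ‖fderiv ℝ (timeDeriv u t) x‖ ≤ C := by
  obtain ⟨C, h⟩ := hu.unif_bound 0 1 T hT
  simp only [pow_zero, one_mul, norm_iteratedFDeriv_one] at h
  exact ⟨C, fun t ht x => ⟨(le_add_of_nonneg_right (norm_nonneg _)).trans (h t ht x),
    (le_add_of_nonneg_left (norm_nonneg _)).trans (h t ht x)⟩⟩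

theorem IsSchwartzSolution.hasDerivAt_integral_momentumDensity
    (hu : IsSchwartzSolution a b lam u) (hX : X.HasTemperateGrowth) {B : ℝ} (hB : ∀ x, ‖X x‖ ≤ B)
    (t : ℝ) : HasDerivAt (fun s => ∫ x, momentumDensity X (u s) (u s) x)
      (∫ x, (momentumDensity X (timeDeriv u t) (u t) x + momentumDensity X (u t) (timeDeriv u t) x))
      t := by
  have hT : 0 < |t| + 1 := by positivity
  obtain ⟨C, hC⟩ := hu.exists_decay_bound hT
  obtain ⟨C', hC'⟩ := hu.exists_fderiv_bound hT
  have : 0 ≤ B := (norm_nonneg _).trans (hB 0)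
  have hnear : Set.Icc (-(|t| + 1)) (|t| + 1) ∈ 𝓝 t :=
    Icc_mem_nhds (by linarith [neg_abs_le t]) (by linarith [le_abs_self t])
  have hu_schwartz : ∀ s, IsSchwartz (u s) := hu.schwartz
  have hut_schwartz : ∀ s, IsSchwartz (timeDeriv u s) := hu.schwartz_dt
  have hdom : Integrable fun x : E3 => 2 * (C' * B) * C * (1 + ‖x‖) ^ (-4 : ℝ) :=
    (integrable_one_add_norm (by norm_num [finrank_euclideanSpace])).const_mul _
  refine (hasDerivAt_integral_of_dominated_loc_of_deriv_le
    (bound := fun x => 2 * (C' * B) * C * (1 + ‖x‖) ^ (-4 : ℝ)) hnear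
    (.of_forall fun s => (((hu_schwartz s).momentumDensity (hu_schwartz s) hX).continuous
      ).aestronglyMeasurable)
    ((hu_schwartz t).momentumDensity (hu_schwartz t) hX).integrable
    (((hut_schwartz t).momentumDensity (hu_schwartz t) hX).add
      ((hu_schwartz t).momentumDensity (hut_schwartz t) hX)).continuous.aestronglyMeasurable
    (ae_of_all _ fun x s hs => ?_) hdom (ae_of_all _ fun x s _ =>
      hasDerivAt_momentumDensity (contDiff_infty.1 hu.smooth 2) X s x)).2
  obtain ⟨hux, hutx⟩ := hC s hs x
  obtain ⟨hdux, hdutx⟩ := hC' s hs x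
  calc |momentumDensity X (timeDeriv u s) (u s) x + momentumDensity X (u s) (timeDeriv u s) x|
      ≤ ‖timeDeriv u s x‖ * ‖fderiv ℝ (u s) x (X x)‖ +
          ‖u s x‖ * ‖fderiv ℝ (timeDeriv u s) x (X x)‖ :=
        (abs_add_le _ _).trans
          (add_le_add (abs_momentumDensity_le X _ _ x) (abs_momentumDensity_le X _ _ x))
    _ ≤ C * (1 + ‖x‖) ^ (-4 : ℝ) * (C' * B) + C * (1 + ‖x‖) ^ (-4 : ℝ) * (C' * B) := by
        have := (norm_nonneg _).trans hux
        gcongr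
        · exact ContinuousLinearMap.le_of_opNorm_le_of_le _ hdux (hB x)
        · exact ContinuousLinearMap.le_of_opNorm_le_of_le _ hdutx (hB x)
    _ = 2 * (C' * B) * C * (1 + ‖x‖) ^ (-4 : ℝ) := by ring

end MomentumDerivative

theorem exists_deriv_lt_of_bounded {f f' : ℝ → ℝ} {B c : ℝ} (hf : ∀ t, HasDerivAt f (f' t) t)
    (hB : ∀ t, |f t| ≤ B) (hc : 0 < c) (t₀ : ℝ) : ∃ t ≥ t₀, f' t < c := by
  have hB0 : 0 ≤ B := (abs_nonneg _).trans (hB 0)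
  set L := (2 * B + 1) / c
  have hL : 0 < L := by positivity
  obtain ⟨t, ht, hslope⟩ := exists_hasDerivAt_eq_slope f f' (lt_add_of_pos_right t₀ hL)
    (fun s _ => (hf s).continuousAt.continuousWithinAt) fun s _ => hf s
  refine ⟨t, ht.1.le, ?_⟩
  rw [hslope, add_sub_cancel_left, div_lt_iff₀ hL, mul_div_cancel₀ _ hc.ne']
  linarith [(abs_le.1 (hB t₀)).1, (abs_le.1 (hB (t₀ + L))).2]

section Decay

variable {a b s : ℝ} {f : E3 → ℂ} {u : ℝ → E3 → ℂ}

theorem mul_norm_virialField_le_one (hs : 0 ≤ s) (x : E3) : s * ‖virialField s x‖ ≤ 1 := by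
  have h := abs_mul_norm_mul_invBracket_le_one s x
  rwa [abs_of_nonneg hs, mul_comm ‖x‖, ← abs_of_pos (invBracket_pos s x), ← Real.norm_eq_abs,
    ← norm_smul] at h

theorem mul_abs_momentumDensity_virialField_le (hs : 0 ≤ s) (f : E3 → ℂ) (x : E3) :
    s * |momentumDensity (virialField s) f f x| ≤ 1 / 2 * (‖f x‖ ^ 2 + gradSq f x) := by
  have hgrad : (s * ‖fderiv ℝ f x (virialField s x)‖) ^ 2 ≤ gradSq f x := by
    calc (s * ‖fderiv ℝ f x (virialField s x)‖) ^ 2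
        ≤ s ^ 2 * (‖virialField s x‖ ^ 2 * gradSq f x) := by
          rw [mul_pow]
          gcongr
          exact norm_fderiv_apply_sq_le f x _
      _ = (s * ‖virialField s x‖) ^ 2 * gradSq f x := by ring
      _ ≤ gradSq f x := mul_le_of_le_one_left (gradSq_nonneg f x)
          (pow_le_one₀ (by positivity) (mul_norm_virialField_le_one hs x))
  calc s * |momentumDensity (virialField s) f f x|
      ≤ s * (‖f x‖ * ‖fderiv ℝ f x (virialField s x)‖) := by
        gcongr
        exact abs_momentumDensity_le _ f f x
    _ ≤ 1 / 2 * (‖f x‖ ^ 2 + (s * ‖fderiv ℝ f x (virialField s x)‖) ^ 2) := by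
        linarith [two_mul_le_add_sq ‖f x‖ (s * ‖fderiv ℝ f x (virialField s x)‖)]
    _ ≤ 1 / 2 * (‖f x‖ ^ 2 + gradSq f x) := by gcongr

theorem abs_integral_momentumDensity_virialField_le (hs : 0 < s) (hf : IsSchwartz f) :
    |∫ x, momentumDensity (virialField s) f f x| ≤
      (2 * s)⁻¹ * ∫ x, (‖f x‖ ^ 2 + gradSq f x) := by
  rw [← integral_const_mul, ← Real.norm_eq_abs]
  refine norm_integral_le_of_norm_le (hf.integrable_norm_sq_add_gradSq.const_mul _)
    (ae_of_all _ fun x => ?_)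
  rw [Real.norm_eq_abs, le_inv_mul_iff₀ (by positivity)]
  linarith [mul_abs_momentumDensity_virialField_le hs.le f x]

theorem IsSchwartzSolution.eq_potential_smul (hu : IsSchwartzSolution a b 1 u) (t : ℝ) {x : E3}
    (hx : x ≠ 0) : Complex.I * timeDeriv u t x + lap (u t) x = potential a b (u t) x • u t x := by
  have h := hu.eqn t x hx
  rw [Complex.real_smul, potential, timeDeriv]
  push_cast at h ⊢
  linear_combination h

theorem IsSchwartzSolution.exists_potentialEnergy_le (hu : IsSchwartzSolution a b 1 u)
    (ha : -(1 / 4) ≤ a) (hb0 : 0 < b) (hb2 : b < 2) {M : ℝ}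
    (hM : ∀ t, ∫ x, (‖u t x‖ ^ 2 + gradSq (u t) x) ≤ M) (hs : 0 < s) (hs1 : s ≤ 1) (t₀ : ℝ) :
    ∃ t ≥ t₀, ∫ x in Metric.closedBall 0 s⁻¹, ‖u t x‖ ^ 4 * ‖x‖ ^ (-b) ≤ (2 + 12 * M) * s := by
  have hX : ∀ x, ‖virialField s x‖ ≤ s⁻¹ := fun x =>
    (le_inv_mul_iff₀ hs).2 (mul_norm_virialField_le_one hs.le x) |>.trans_eq (mul_one _)
  have hmomentum : ∀ t, |∫ x, momentumDensity (virialField s) (u t) (u t) x| ≤ (2 * s)⁻¹ * M :=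
    fun t => (abs_integral_momentumDensity_virialField_le hs (hu.schwartz t)).trans
      (mul_le_mul_of_nonneg_left (hM t) (by positivity))
  obtain ⟨t, ht, hslow⟩ := exists_deriv_lt_of_bounded
    (hu.hasDerivAt_integral_momentumDensity (hasTemperateGrowth_virialField s) hX) hmomentum hs t₀
  refine ⟨t, ht, ?_⟩
  have hvirial := potentialEnergy_le_of_equation (g := timeDeriv u t) hb0 hb2 (hu.schwartz t)
    (hu.schwartz_dt t) (fun x hx => hu.eq_potential_smul t hx) hs hs1 ha
  have hMs := mul_le_mul_of_nonneg_left (hM t) hs.le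
  linarith

theorem potential_energy_decay_general (a b : ℝ) (ha : -(1 / 4 : ℝ) ≤ a) (hb0 : 0 < b)
    (hb2 : b < 2) (u : ℝ → E3 → ℂ) (hu : IsSchwartzSolution a b 1 u) (E : ℝ)
    (hbd : ∀ t : ℝ, ∫ x : E3,
        (‖u t x‖ ^ 2 + ∑ j : Fin 3, ‖pd j (u t) x‖ ^ 2) ≤ E ^ 2) :
    ∃ tn Rn : ℕ → ℝ, Tendsto tn atTop atTop ∧ Tendsto Rn atTop atTop ∧
      Tendsto (fun n => ∫ x in Metric.closedBall (0 : E3) (Rn n),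
          ‖u (tn n) x‖ ^ 4 * ‖x‖ ^ (-b)) atTop (nhds 0) := by
  have hR : Tendsto (fun n : ℕ => (n : ℝ) + 1) atTop atTop :=
    tendsto_atTop_add_const_right _ _ tendsto_natCast_atTop_atTop
  have hR1 : ∀ n : ℕ, (1 : ℝ) ≤ n + 1 := fun n => le_add_of_nonneg_left n.cast_nonneg
  choose tn htn hdecay using fun n : ℕ => hu.exists_potentialEnergy_le ha hb0 hb2 hbd
    (inv_pos.2 n.cast_add_one_pos) (inv_le_one_of_one_le₀ (hR1 n)) n
  simp only [inv_inv] at hdecay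
  refine ⟨tn, fun n => n + 1, tendsto_atTop_mono htn tendsto_natCast_atTop_atTop, hR,
    squeeze_zero (fun n => integral_nonneg fun x => by positivity) hdecay ?_⟩
  simpa using hR.inv_tendsto_atTop.const_mul (2 + 12 * E ^ 2)

end Decay

/-- **Potential energy decay along a sequence of times (defocusing case
`λ = 1`).** For a uniformly `H¹`-bounded smooth Schwartz solution there are
sequences `t_n → ∞` and `R_n → ∞` with
`∫_{|x| ≤ R_n} |u(t_n,x)|⁴/|x|^b dx → 0`. -/
theorem potential_energy_decay (a b : ℝ) (ha : -(1/4 : ℝ) < a)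
    (hb0 : 0 < b) (hb1 : b < 1)
    (u : ℝ → E3 → ℂ) (hu : IsSchwartzSolution a b 1 u)
    (E : ℝ) (hE : 0 < E)
    (hbd : ∀ t : ℝ, ∫ x : E3,
        (‖u t x‖ ^ 2 + ∑ j : Fin 3, ‖pd j (u t) x‖ ^ 2) ≤ E ^ 2) :
    ∃ tn Rn : ℕ → ℝ, Tendsto tn atTop atTop ∧ Tendsto Rn atTop atTop ∧
      Tendsto (fun n => ∫ x in Metric.closedBall (0 : E3) (Rn n),
          ‖u (tn n) x‖ ^ 4 * ‖x‖ ^ (-b)) atTop (nhds 0) :=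
  potential_energy_decay_general a b ha.le hb0 (by linarith) u hu E hbd
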